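/- arXiv:1007.0157 — 3 statements merged into one kernel-verified Lean document; each statement's English description precedes it below -/
import Mathlib

section
/- Every free group is 2-order separable: for any two elements u, v of a free group F such that u is conjugate to neither v nor v⁻¹, there exists a homomorphism φ of F onto a finite group with |φ(u)| ≠ |φ(v)|. -/
/-!
Integer weights on the edges of the Cayley graph of a finite quotient `G` of a free group `F` define
a homomorphism from `F` to the wreath product of `ℤ` by `G`, in the spirit of the Magnus embedding.
The image of `w` has finite order if and only if the weight annihilates all translates of the closed
chain of `w`, the chain of edges traversed when `w` is repeated until the path closes up. Finite
quotients of the wreath product separate elements of finite order from those of infinite order.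

Write `u = r ^ a` and `v = s ^ b` with roots `r` and `s`. If `r` is conjugate neither to `s` nor to
`s⁻¹`, it remains to find a weight that annihilates the translates of only one of the two closed
chains. If there were none, both chains would have the same orbit span in the space of real chains.
Its dimension is at most `|G| / |r|` and at most `|G| / |s|`, where `|r|` and `|s|` are the orders
in `G`. But if `G` is such that the axes of `r` and `s` and their translates overlap little, then
distinct translates of the two chains are nearly orthogonal, and comparing the trace of their Gram
operator with that of its square shows that they span a dimension close to `|G| / |r| + |G| / |s|`.

If `r` is conjugate to `s` or `s⁻¹`, then `a ≠ b`, and a weight for which `r` maps to an element of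
infinite order suffices, as some finite quotient then makes the order of `r` a multiple of `a * b`.
-/

/-- Two elements are *order separable* if their images in some finite quotient have different
orders. Finite quotients are encoded by normal subgroups of finite index. -/
def OrderSeparable {G : Type*} [Group G] (g h : G) : Prop :=
  ∃ N : FiniteIndexNormalSubgroup G,
    orderOf (g : G ⧸ N.toSubgroup) ≠ orderOf (h : G ⧸ N.toSubgroup)

namespace OrderSeparable

variable {G H : Type*} [Group G] [Group H] {g h : G}

theorem symm (hgh : OrderSeparable g h) : OrderSeparable h g :=
  hgh.imp fun _ hN => hN.symm

theorem of_finite [Finite H] (f : G →* H) (hf : orderOf (f g) ≠ orderOf (f h)) :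
    OrderSeparable g h := by
  have order_eq (x : G) : orderOf (x : G ⧸ f.ker) = orderOf (f x) :=
    (orderOf_injective (QuotientGroup.kerLift f) (QuotientGroup.kerLift_injective f) x).symm
  have : f.ker.FiniteIndex := Subgroup.finiteIndex_ker f
  refine ⟨.ofSubgroup f.ker, fun heq => hf ?_⟩
  rw [← order_eq g, ← order_eq h]
  exact heq

theorem of_map (f : G →* H) (hf : OrderSeparable (f g) (f h)) : OrderSeparable g h := by
  obtain ⟨N, hN⟩ := hf
  have : Finite (H ⧸ N.toSubgroup) := Subgroup.finite_quotient_of_finiteIndex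
  exact of_finite ((QuotientGroup.mk' N.toSubgroup).comp f) hN

theorem congr_right {h' : G} (hgh : OrderSeparable g h) (hconj : IsConj h h') :
    OrderSeparable g h' := by
  obtain ⟨N, hN⟩ := hgh
  obtain ⟨c, hc⟩ := hconj
  exact ⟨N, hN.trans_eq (SemiconjBy.orderOf_eq _ (hc.map (QuotientGroup.mk' N.toSubgroup)))⟩

theorem inv_right (hgh : OrderSeparable g h) : OrderSeparable g h⁻¹ := by
  obtain ⟨N, hN⟩ := hgh
  exact ⟨N, hN.trans_eq (by rw [QuotientGroup.mk_inv, orderOf_inv])⟩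

theorem pow_of_dvd_orderOf [Finite H] (f : G →* H) {a b : ℕ} (hab : a ≠ b)
    (hdvd : a * b ∣ orderOf (f g)) : OrderSeparable (g ^ a) (g ^ b) := by
  have hpos : 0 < orderOf (f g) := orderOf_pos (f g)
  obtain ⟨ha, hb⟩ : a ≠ 0 ∧ b ≠ 0 := by
    rw [← mul_ne_zero_iff]
    exact ne_zero_of_dvd_ne_zero hpos.ne' hdvd
  refine of_finite f fun heq => hab ?_
  have ha_dvd : a ∣ orderOf (f g) := dvd_of_mul_right_dvd hdvd
  have hb_dvd : b ∣ orderOf (f g) := dvd_of_mul_left_dvd hdvd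
  rw [map_pow, map_pow, orderOf_pow_of_dvd ha ha_dvd, orderOf_pow_of_dvd hb hb_dvd] at heq
  have hquot : orderOf (f g) / a ≠ 0 := (Nat.div_pos (Nat.le_of_dvd hpos ha_dvd) ha.bot_lt).ne'
  refine Nat.eq_of_mul_eq_mul_right hquot.bot_lt ?_
  rw [Nat.mul_div_cancel' ha_dvd, heq, Nat.mul_div_cancel' hb_dvd]

end OrderSeparable

section ResiduallyFinite

open scoped commutatorElement

universe u

variable {α : Type u}

theorem exists_perm_of_isReduced {L : List (α × Bool)} (hL : FreeGroup.IsReduced L) :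
    ∃ σ : α → Equiv.Perm (Fin (L.length + 1)), ∀ i : Fin L.length,
      (bif L[i.1].2 then σ L[i.1].1 else (σ L[i.1].1)⁻¹) i.succ = i.castSucc := by
  let source (i : Fin L.length) : Fin (L.length + 1) := bif L[i.1].2 then i.succ else i.castSucc
  let target (i : Fin L.length) : Fin (L.length + 1) := bif L[i.1].2 then i.castSucc else i.succ
  have sign_eq (i j : Fin L.length) (hij : j.1 = i.1 + 1) (hletter : L[i.1].1 = L[j.1].1) :
      L[i.1].2 = L[j.1].2 := by
    have hj : i.1 + 1 < L.length := hij ▸ j.2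
    obtain rfl : j = ⟨i.1 + 1, hj⟩ := Fin.ext hij
    exact List.isChain_iff_getElem.1 hL i.1 hj hletter
  have eq_of_endpoint_eq {i j : Fin L.length} (hletter : L[i.1].1 = L[j.1].1)
      (h : source i = source j ∨ target i = target j) : i = j := by
    have hij := fun hnext => sign_eq i j hnext hletter
    have hji := fun hnext => sign_eq j i hnext hletter.symm
    rw [Fin.ext_iff, Fin.ext_iff] at h
    rw [Fin.ext_iff]
    cases hi : L[i.1].2 <;> cases hj : L[j.1].2 <;>
      simp only [source, target, hi, hj, cond_true, cond_false, Fin.val_succ, Fin.val_castSucc,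
        reduceCtorEq, imp_false] at h hij hji <;> omega
  choose σ hσ using fun x => Equiv.Perm.exists_extending_pair
    (fun i : {i : Fin L.length // L[i.1].1 = x} => source i) (fun i => target i)
    (fun i j h => Subtype.ext (eq_of_endpoint_eq (i.2.trans j.2.symm) (.inl h)))
    (fun i j h => Subtype.ext (eq_of_endpoint_eq (i.2.trans j.2.symm) (.inr h)))
  refine ⟨σ, fun i => ?_⟩
  have hi := hσ L[i.1].1 ⟨i, rfl⟩
  cases hsign : L[i.1].2 <;> simp only [source, target, hsign, cond_true, cond_false] at hi ⊢
  · exact Equiv.Perm.inv_eq_iff_eq.2 hi.symm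
  · exact hi

instance : Group.ResiduallyFinite (FreeGroup α) := by
  classical
  refine Group.residuallyFinite_of_forall_exists_finite_monoidHom fun w hw => ?_
  let L := w.toWord
  obtain ⟨σ, hσ⟩ := exists_perm_of_isReduced (FreeGroup.isReduced_toWord (x := w))
  refine ⟨Equiv.Perm (Fin (L.length + 1)), inferInstance, inferInstance, FreeGroup.lift σ,
    fun hone => ?_⟩
  have suffix_apply (i : Fin (L.length + 1)) :
      FreeGroup.lift σ (FreeGroup.mk (L.drop i)) (Fin.last L.length) = i := by
    induction i using Fin.reverseInduction with
    | last => simp [← FreeGroup.one_eq_mk]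
    | cast i ih =>
      have hcons : FreeGroup.mk (L.drop i.castSucc) =
          FreeGroup.mk [L[i.1]] * FreeGroup.mk (L.drop i.succ) := by
        rw [FreeGroup.mul_mk, List.singleton_append, Fin.val_castSucc, Fin.val_succ,
          List.drop_eq_getElem_cons i.2]
      rw [hcons, map_mul, Equiv.Perm.mul_apply, ih]
      simpa only [FreeGroup.lift_mk, List.map_cons, List.map_nil, List.prod_singleton] using hσ i
  have hlast := suffix_apply 0
  rw [Fin.val_zero, List.drop_zero, FreeGroup.mk_toWord, hone, Equiv.Perm.one_apply] at hlast
  have hlength : L.length = 0 := congrArg Fin.val hlast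
  exact hw (FreeGroup.toWord_eq_nil_iff.1 (List.length_eq_zero_iff.1 hlength))

variable {F : Type u} [Group F] [Group.ResiduallyFinite F]

theorem exists_finite_hom_forall_ne_one (T : Finset F) (hT : ∀ t ∈ T, t ≠ 1) :
    ∃ (G : Type u) (_ : Group G) (_ : Finite G) (φ : F →* G), ∀ t ∈ T, φ t ≠ 1 := by
  choose N hN using fun t : T => Group.exists_finiteIndexNormalSubgroup_notMem t.1 (hT t t.2)
  have (t : T) : Finite (F ⧸ (N t).toSubgroup) := Subgroup.finite_quotient_of_finiteIndex
  refine ⟨∀ t, F ⧸ (N t).toSubgroup, inferInstance, inferInstance,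
    MonoidHom.pi fun t => QuotientGroup.mk' (N t).toSubgroup, fun t ht h => hN ⟨t, ht⟩ ?_⟩
  exact (QuotientGroup.eq_one_iff t).1 (congrFun h ⟨t, ht⟩)

theorem exists_finite_hom_forall_not_commute (T : Finset (F × F))
    (hT : ∀ t ∈ T, ¬ Commute t.1 t.2) :
    ∃ (G : Type u) (_ : Group G) (_ : Finite G) (φ : F →* G),
      ∀ t ∈ T, ¬ Commute (φ t.1) (φ t.2) := by
  classical
  obtain ⟨G, _, _, φ, hφ⟩ :=
    exists_finite_hom_forall_ne_one (T.image fun t => ⁅t.1, t.2⁆) fun w hw => by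
      obtain ⟨t, ht, rfl⟩ := Finset.mem_image.1 hw
      exact mt commutatorElement_eq_one_iff_commute.1 (hT t ht)
  refine ⟨G, _, inferInstance, φ, fun t ht hcomm => ?_⟩
  refine hφ _ (Finset.mem_image_of_mem _ ht) ?_
  rw [map_commutatorElement]
  exact commutatorElement_eq_one_iff_commute.2 hcomm

theorem orderSeparable_one_of_ne_one {v : F} (hv : v ≠ 1) : OrderSeparable 1 v := by
  obtain ⟨N, hN⟩ := Group.exists_finiteIndexNormalSubgroup_notMem v hv
  refine ⟨N, fun heq => hN ((QuotientGroup.eq_one_iff v).1 ?_)⟩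
  rw [← orderOf_eq_one_iff, ← heq, QuotientGroup.mk_one, orderOf_one]

end ResiduallyFinite

section Roots

theorem center_freeGroup_eq_bot {α : Type*} [Nontrivial α] :
    Subgroup.center (FreeGroup α) = ⊥ := by
  classical
  refine (Subgroup.eq_bot_iff_forall _).2 fun z hz => by_contra fun hne => ?_
  have hnil : z.toWord ≠ [] := mt FreeGroup.toWord_eq_nil_iff.1 hne
  obtain ⟨first, tail, hfirst⟩ := List.exists_cons_of_ne_nil hnil
  obtain ⟨init, last, hlast⟩ := (List.eq_nil_or_concat' z.toWord).resolve_left hnil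
  obtain ⟨x, hx⟩ := exists_ne first.1
  let y : α × Bool := (x, last.2)
  have hreduced : FreeGroup.IsReduced z.toWord := FreeGroup.isReduced_toWord
  have cons_reduced : FreeGroup.IsReduced (y :: z.toWord) := by
    rw [hfirst] at hreduced ⊢
    exact FreeGroup.isReduced_cons_cons.2 ⟨fun h => absurd h hx, hreduced⟩
  have concat_reduced : FreeGroup.IsReduced (z.toWord ++ [y]) := by
    rw [hlast] at hreduced ⊢
    refine List.isChain_append.2 ⟨hreduced, List.isChain_singleton y, fun p hp q hq => ?_⟩
    obtain rfl : last = p := by simpa using hp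
    obtain rfl : y = q := by simpa using hq
    exact fun _ => rfl
  have hcomm : FreeGroup.mk (z.toWord ++ [y]) = FreeGroup.mk (y :: z.toWord) := by
    rw [← List.singleton_append (l := z.toWord), ← FreeGroup.mul_mk, ← FreeGroup.mul_mk,
      FreeGroup.mk_toWord]
    exact (Subgroup.mem_center_iff.1 hz _).symm
  have hwords := FreeGroup.reduce.sound hcomm
  rw [concat_reduced.reduce_eq, cons_reduced.reduce_eq, hfirst] at hwords
  exact hx (congrArg Prod.fst (List.cons.inj hwords).1).symm

theorem isCyclic_of_mem_center {G : Type*} [Group G] [IsFreeGroup G] {z : G}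
    (hz : z ∈ Subgroup.center G) (hne : z ≠ 1) : IsCyclic G := by
  let e := IsFreeGroup.toFreeGroup G
  rcases subsingleton_or_nontrivial (IsFreeGroup.Generators G) with hsub | hnontrivial
  · have : IsCyclic (FreeGroup (IsFreeGroup.Generators G)) := by
      rcases isEmpty_or_nonempty (IsFreeGroup.Generators G) with hempty | ⟨⟨x⟩⟩
      · infer_instance
      · have := uniqueOfSubsingleton x
        infer_instance
    exact isCyclic_of_surjective e.symm e.symm.surjective
  · have hcenter : e z ∈ Subgroup.center (FreeGroup (IsFreeGroup.Generators G)) :=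
      Subgroup.mem_center_iff.2 fun w => by
        rw [← e.apply_symm_apply w, ← map_mul, ← map_mul, Subgroup.mem_center_iff.1 hz]
    rw [center_freeGroup_eq_bot, Subgroup.mem_bot] at hcenter
    exact absurd ((map_eq_one_iff e e.injective).1 hcenter) hne

/-- A *root* is a nontrivial element generating its own centralizer; in a free group these are the
nontrivial elements that are not proper powers. -/
def IsRoot {G : Type*} [Group G] (r : G) : Prop :=
  r ≠ 1 ∧ ∀ w, Commute w r → w ∈ Subgroup.zpowers r

namespace IsRoot

theorem conj {G : Type*} [Group G] {r : G} (hr : IsRoot r) (g : G) : IsRoot (g * r * g⁻¹) := by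
  refine ⟨mt conj_eq_one_iff.1 hr.1, fun w hw => ?_⟩
  have hcomm : Commute (g⁻¹ * w * g) r := by
    simpa [mul_assoc] using hw.map (MulAut.conj g⁻¹)
  obtain ⟨k, hk⟩ := hr.2 _ hcomm
  refine ⟨k, ?_⟩
  simp only at hk ⊢
  rw [conj_zpow, hk]
  group

theorem inv {G : Type*} [Group G] {r : G} (hr : IsRoot r) : IsRoot r⁻¹ :=
  ⟨inv_ne_one.2 hr.1, fun w hw =>
    Subgroup.zpowers_inv (g := r) ▸ hr.2 w (Commute.inv_right_iff.1 hw)⟩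

end IsRoot

variable {α : Type*} {r s u : FreeGroup α}

theorem exists_zpowers_eq_centralizer (hu : u ≠ 1) :
    ∃ r, Subgroup.zpowers r = Subgroup.centralizer {u} := by
  let C := Subgroup.centralizer {u}
  have hmem : u ∈ C := Subgroup.mem_centralizer_singleton_iff.2 rfl
  have hcenter : (⟨u, hmem⟩ : C) ∈ Subgroup.center C :=
    Subgroup.mem_center_iff.2 fun w =>
      Subtype.ext (Subgroup.mem_centralizer_singleton_iff.1 w.2)
  have : IsCyclic C := isCyclic_of_mem_center hcenter fun h => hu (congrArg Subtype.val h)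
  exact C.isCyclic_iff_exists_zpowers_eq_top.1 this

theorem commute_of_commute_of_ne_one {a b : FreeGroup α} (hu : u ≠ 1) (ha : Commute a u)
    (hb : Commute b u) : Commute a b := by
  obtain ⟨r, hr⟩ := exists_zpowers_eq_centralizer hu
  have mem_zpowers {w : FreeGroup α} (hw : Commute w u) : w ∈ Subgroup.zpowers r :=
    hr ▸ Subgroup.mem_centralizer_singleton_iff.2 hw.eq
  obtain ⟨i, rfl⟩ := mem_zpowers ha
  obtain ⟨j, rfl⟩ := mem_zpowers hb
  exact (Commute.refl r).zpow_zpow i j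

theorem exists_isRoot_pow_eq (hu : u ≠ 1) : ∃ r : FreeGroup α, IsRoot r ∧ ∃ k : ℕ, r ^ k = u := by
  obtain ⟨r, hr⟩ := exists_zpowers_eq_centralizer hu
  obtain ⟨k, hk⟩ : u ∈ Subgroup.zpowers r := hr ▸ Subgroup.mem_centralizer_singleton_iff.2 rfl
  have hroot : IsRoot r := by
    refine ⟨?_, fun w hw => ?_⟩
    · rintro rfl
      exact hu (by simpa using hk.symm)
    · rw [hr, Subgroup.mem_centralizer_singleton_iff, ← hk]
      exact hw.zpow_right k
  obtain ⟨n, rfl | rfl⟩ := k.eq_nat_or_neg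
  · exact ⟨r, hroot, n, by simpa using hk⟩
  · exact ⟨r⁻¹, hroot.inv, n, by simpa using hk⟩

namespace IsRoot

theorem eq_or_eq_inv_of_commute {G : Type*} [Group G] [IsMulTorsionFree G] {r s : G}
    (hr : IsRoot r) (hs : IsRoot s) (h : Commute r s) : r = s ∨ r = s⁻¹ := by
  obtain ⟨i, hi : s ^ i = r⟩ := hs.2 r h
  obtain ⟨j, hj : r ^ j = s⟩ := hr.2 s h.symm
  have hpow : s ^ (i * j) = s ^ (1 : ℤ) := by rw [zpow_mul, hi, hj, zpow_one]
  have hij : i * j = 1 :=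
    injective_zpow_iff_not_isOfFinOrder.2 (not_isOfFinOrder_of_isMulTorsionFree hs.1) hpow
  rcases Int.eq_one_or_neg_one_of_mul_eq_one hij with rfl | rfl
  · exact .inl (by simpa using hi.symm)
  · exact .inr (by simpa using hi.symm)

theorem eq_or_eq_inv_of_commute_pow (hr : IsRoot r) (hs : IsRoot s) {d : ℕ} (hd : d ≠ 0)
    (h : Commute (r ^ d) s) : r = s ∨ r = s⁻¹ :=
  hr.eq_or_eq_inv_of_commute hs <|
    commute_of_commute_of_ne_one (mt (pow_eq_one_iff_left hd).1 hr.1) (Commute.self_pow r d) h.symm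

theorem mem_zpowers_of_conj_eq (hr : IsRoot r) {g : FreeGroup α}
    (h : r = g * r * g⁻¹ ∨ r = (g * r * g⁻¹)⁻¹) : g ∈ Subgroup.zpowers r := by
  refine hr.2 g ?_
  rcases h with h | h
  · exact (eq_mul_inv_iff_mul_eq.1 h).symm
  · rcases eq_or_ne g 1 with rfl | hg
    · exact Commute.one_left r
    have hsq : Commute (g ^ 2) r := by
      have hinv : g * r * g⁻¹ = r⁻¹ := inv_eq_iff_eq_inv.1 h.symm
      refine mul_inv_eq_iff_eq_mul.1 ?_
      calc g ^ 2 * r * (g ^ 2)⁻¹ = g * (g * r * g⁻¹) * g⁻¹ := by simp only [pow_two]; group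
        _ = g * r⁻¹ * g⁻¹ := by rw [hinv]
        _ = (g * r * g⁻¹)⁻¹ := by group
        _ = r := h.symm
    exact commute_of_commute_of_ne_one (mt (pow_eq_one_iff_left two_ne_zero).1 hg)
      (Commute.self_pow g 2) hsq.symm

end IsRoot

end Roots

section WreathProduct

universe u

theorem wreathProduct_pow_left {D Q : Type*} [CommGroup D] [Group Q] (x : D ≀ᵣ Q) (n : ℕ) (g : Q) :
    (x ^ n).left g = ∏ k ∈ Finset.range n, x.left ((x.right ^ k)⁻¹ * g) := by
  have pow_right (k : ℕ) : (x ^ k).right = x.right ^ k :=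
    map_pow (RegularWreathProduct.rightHom (D := D) (Q := Q)) x k
  induction n with
  | zero => simp
  | succ n ih =>
    rw [pow_succ, RegularWreathProduct.mul_left, Pi.mul_apply, ih, pow_right,
      Finset.prod_range_succ]

theorem wreathProduct_pow_orderOf_right {D Q : Type*} [Group D] [Group Q] (x : D ≀ᵣ Q) :
    (x ^ orderOf x.right).right = 1 :=
  (map_pow RegularWreathProduct.rightHom x _).trans (pow_orderOf_eq_one x.right)

theorem isOfFinOrder_wreathProduct_iff {D Q : Type*} [CommGroup D] [IsMulTorsionFree D] [Group Q]
    [Finite Q] {x : D ≀ᵣ Q} : IsOfFinOrder x ↔ ∀ g, (x ^ orderOf x.right).left g = 1 := by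
  let y := x ^ orderOf x.right
  have hright : y.right = 1 := wreathProduct_pow_orderOf_right x
  constructor
  · intro hx g
    obtain ⟨T, hT, hpow⟩ := isOfFinOrder_iff_pow_eq_one.1 (hx.pow (n := orderOf x.right))
    have hleft : (y ^ T).left g = 1 := congrFun (congrArg RegularWreathProduct.left hpow) g
    rw [wreathProduct_pow_left] at hleft
    simp only [hright, one_pow, inv_one, one_mul, Finset.prod_const, Finset.card_range] at hleft
    exact (pow_eq_one_iff_left hT.ne').1 hleft
  · intro hleft
    exact isOfFinOrder_iff_pow_eq_one.2
      ⟨_, orderOf_pos _, RegularWreathProduct.ext (funext hleft) hright⟩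

/-- The homomorphism between regular wreath products that applies `f` to every coordinate of the
base group. -/
def wreathMap {D D' : Type*} (Q : Type*) [Group D] [Group D'] [Group Q] (f : D →* D') :
    D ≀ᵣ Q →* D' ≀ᵣ Q where
  toFun x := ⟨f ∘ x.left, x.right⟩
  map_one' := by ext <;> simp
  map_mul' x y := by ext <;> simp

variable {Q : Type u} [Group Q] [Finite Q]

theorem exists_finite_hom_dvd_orderOf {x : Multiplicative ℤ ≀ᵣ Q} (hx : ¬ IsOfFinOrder x) {k : ℕ}
    (hk : k ≠ 0) :
    ∃ (H : Type u) (_ : Group H) (_ : Finite H) (f : Multiplicative ℤ ≀ᵣ Q →* H),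
      k ∣ orderOf (f x) := by
  let n := orderOf x.right
  have hright : (x ^ n).right = 1 := wreathProduct_pow_orderOf_right x
  obtain ⟨g, hg⟩ := not_forall.1 (mt isOfFinOrder_wreathProduct_iff.2 hx)
  let N : ℤ := ((x ^ n).left g).toAdd
  have hN : N.natAbs ≠ 0 := Int.natAbs_ne_zero.2 hg
  let m := k * N.natAbs
  have : NeZero m := ⟨mul_ne_zero hk hN⟩
  let f := wreathMap Q (AddMonoidHom.toMultiplicative (Int.castAddHom (ZMod m)))
  refine ⟨Multiplicative (ZMod m) ≀ᵣ Q, inferInstance, inferInstance, f, ?_⟩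
  let T := orderOf (f x)
  have hpow : f ((x ^ n) ^ T) = 1 := by
    rw [← pow_mul, mul_comm, pow_mul, map_pow, map_pow, pow_orderOf_eq_one, one_pow]
  have hleft : (((x ^ n) ^ T).left g).toAdd = T * N := by
    simp [wreathProduct_pow_left (x ^ n), hright, N]
  have hzero : ((T * N : ℤ) : ZMod m) = 0 :=
    hleft ▸ congrArg Multiplicative.toAdd (congrFun (congrArg RegularWreathProduct.left hpow) g)
  have hdvd : k * N.natAbs ∣ T * N.natAbs := by
    simpa only [m, Int.natAbs_mul, Int.natAbs_natCast] using
      Int.natAbs_dvd_natAbs.2 ((ZMod.intCast_zmod_eq_zero_iff_dvd _ m).1 hzero)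
  exact Nat.dvd_of_mul_dvd_mul_right hN.bot_lt hdvd

theorem orderSeparable_of_isOfFinOrder {x y : Multiplicative ℤ ≀ᵣ Q} (hx : IsOfFinOrder x)
    (hy : ¬ IsOfFinOrder y) : OrderSeparable x y := by
  obtain ⟨H, _, _, f, hf⟩ := exists_finite_hom_dvd_orderOf hy (orderOf x).succ_ne_zero
  refine .of_finite f fun heq => ?_
  have hdvd : orderOf x + 1 ∣ orderOf x := (heq ▸ hf).trans (orderOf_map_dvd f x)
  exact (Nat.le_of_dvd hx.orderOf_pos hdvd).not_gt (Nat.lt_succ_self _)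

end WreathProduct

section FoxCalculus

open RegularWreathProduct

variable {α : Type*}

/-- The integral chain of edges traversed in the Cayley graph of the free group by the path that
starts at `g` and reads the word `L`. The pair `(e, x)` stands for the edge from `e` to `e * x`. -/
noncomputable def pathChain : FreeGroup α → List (α × Bool) → (FreeGroup α × α →₀ ℤ)
  | _, [] => 0
  | g, (x, true) :: L => Finsupp.single (g, x) 1 + pathChain (g * .of x) L
  | g, (x, false) :: L =>
      pathChain (g * (.of x)⁻¹) L - Finsupp.single (g * (.of x)⁻¹, x) 1

/-- The chain of the path from `1` to `w` in the Cayley graph of the free group. The coefficients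
of the edges labelled `x` are those of the Fox derivative of `w` with respect to `x`. -/
noncomputable def foxChain (w : FreeGroup α) : FreeGroup α × α →₀ ℤ :=
  open scoped Classical in pathChain 1 w.toWord

theorem linearCombination_foxChain {A : Type*} [AddCommGroup A] {D : FreeGroup α → FreeGroup α → A}
    (hD : ∀ v w g, D (v * w) g = D v g + D w (g * v)) (w : FreeGroup α) :
    Finsupp.linearCombination ℤ (fun t => D (.of t.2) t.1) (foxChain w) = D w 1 := by
  classical
  have one_eq (g : FreeGroup α) : D 1 g = 0 := by simpa using hD 1 1 g
  have inv_eq (v g : FreeGroup α) : D v⁻¹ g = -D v (g * v⁻¹) := by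
    have := hD v⁻¹ v g
    rw [inv_mul_cancel, one_eq] at this
    exact eq_neg_of_add_eq_zero_left this.symm
  have path (L : List (α × Bool)) (g : FreeGroup α) :
      Finsupp.linearCombination ℤ (fun t => D (.of t.2) t.1) (pathChain g L) = D (.mk L) g := by
    induction L generalizing g with
    | nil => simp [pathChain, ← FreeGroup.one_eq_mk, one_eq]
    | cons p L ih =>
      obtain ⟨x, _ | _⟩ := p
      · have hcons : FreeGroup.mk ((x, false) :: L) = (FreeGroup.of x)⁻¹ * FreeGroup.mk L := rfl
        rw [hcons, hD, inv_eq, pathChain, map_sub, ih, Finsupp.linearCombination_single, one_smul]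
        abel
      · have hcons : FreeGroup.mk ((x, true) :: L) = FreeGroup.of x * FreeGroup.mk L := rfl
        rw [hcons, hD, pathChain, map_add, ih, Finsupp.linearCombination_single, one_smul]
  rw [foxChain, path, FreeGroup.mk_toWord]

theorem linearCombination_foxChain_sub {A : Type*} [AddCommGroup A] (h : FreeGroup α → A)
    (w : FreeGroup α) :
    Finsupp.linearCombination ℤ (fun t => h (t.1 * .of t.2) - h t.1) (foxChain w) =
      h w - h 1 := by
  simpa using linearCombination_foxChain (D := fun w g => h (g * w) - h g)
    (fun v w g => by rw [mul_assoc]; abel) w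

variable {G : Type*} [Group G]

/-- The homomorphism into a wreath product that lifts `φ` and assigns to a path in the Cayley graph
of `G` its total weight, an edge `(p, x)` having weight `c (p, x)`. Since a translation of the path
appears as translation of the weight, the coordinate at `g` is the weight of the path from `g⁻¹`. -/
def magnusHom (φ : FreeGroup α →* G) (c : G × α → ℤ) : FreeGroup α →* Multiplicative ℤ ≀ᵣ G :=
  FreeGroup.lift fun x => ⟨fun g => .ofAdd (c (g⁻¹, x)), φ (.of x)⟩

variable (φ : FreeGroup α →* G) (c : G × α → ℤ) (w : FreeGroup α)

theorem magnusHom_right : (magnusHom φ c w).right = φ w := by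
  have : rightHom.comp (magnusHom φ c) = φ := FreeGroup.ext_hom _ _ fun x => by
    simp [magnusHom]
  exact DFunLike.congr_fun this w

theorem magnusHom_left (g : G) :
    ((magnusHom φ c w).left g).toAdd =
      Finsupp.linearCombination ℤ (fun t => c (g⁻¹ * φ t.1, t.2)) (foxChain w) := by
  have crossed := linearCombination_foxChain
    (D := fun w e => ((magnusHom φ c w).left ((φ e)⁻¹ * g)).toAdd)
    (fun v w e => by simp [magnusHom_right, mul_assoc]) w
  simpa [magnusHom] using crossed.symm

/-- The chain in the Cayley graph of `G` of the closed path from `1` that reads `w` as often as the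
order of `φ w` indicates. -/
noncomputable def closedChain : G × α →₀ ℤ :=
  ∑ k ∈ Finset.range (orderOf (φ w)), (foxChain w).mapDomain fun t => (φ w ^ k * φ t.1, t.2)

theorem isOfFinOrder_magnusHom_iff [Finite G] :
    IsOfFinOrder (magnusHom φ c w) ↔
      ∀ g, Finsupp.linearCombination ℤ (fun t => c (g * t.1, t.2)) (closedChain φ w) = 0 := by
  have left_pow (g : G) :
      ((magnusHom φ c w ^ orderOf (magnusHom φ c w).right).left g).toAdd =
        Finsupp.linearCombination ℤ (fun t => c (g⁻¹ * t.1, t.2)) (closedChain φ w) := by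
    rw [wreathProduct_pow_left, toAdd_prod, closedChain, map_sum, magnusHom_right]
    refine Finset.sum_congr rfl fun k _ => ?_
    rw [magnusHom_left, Finsupp.linearCombination_mapDomain]
    simp only [Function.comp_def, mul_inv_rev, inv_inv, mul_assoc]
  rw [isOfFinOrder_wreathProduct_iff, (Equiv.inv G).forall_congr_left]
  refine forall_congr' fun g => ?_
  rw [← toAdd_eq_zero, left_pow]
  simp

end FoxCalculus

section Nonvanishing

theorem exists_zpow_mul_eq_add {G : Type*} [Group G] {r : G} (hr : ¬ IsOfFinOrder r) :
    ∃ h : G → ℤ, ∀ (k : ℤ) (p : G), h (r ^ k * p) = k + h p := by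
  obtain ⟨T, hT, -⟩ := (Subgroup.zpowers r).exists_isComplement_right 1
  choose exponent hexponent using fun y : Subgroup.zpowers r => Subgroup.mem_zpowers_iff.1 y.2
  refine ⟨fun p => exponent (hT.equiv p).1, fun k p => ?_⟩
  apply injective_zpow_iff_not_isOfFinOrder.2 hr
  have hmul := hT.equiv_mul_left ⟨r ^ k, Subgroup.zpow_mem_zpowers r k⟩ p
  rw [Subtype.coe_mk] at hmul
  simp only [zpow_add, hexponent, hmul]
  rfl

theorem exists_invariant_extension {H G α β : Type*} [Group H] [Group G] [Nonempty β] {φ : H →* G}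
    {r : H} {S : Finset (H × α)} (hS : ∀ t ∈ S, ∀ t' ∈ S,
      φ (t.1 * t'.1⁻¹) ∈ Subgroup.zpowers (φ r) → t.1 * t'.1⁻¹ ∈ Subgroup.zpowers r)
    {c : H × α → β} (hc : ∀ (k : ℤ) e x, c (r ^ k * e, x) = c (e, x)) :
    ∃ d : G × α → β, ∀ t ∈ S, ∀ k : ℕ, d (φ r ^ k * φ t.1, t.2) = c t := by
  let coset (t : G × α) : Quotient (QuotientGroup.rightRel (Subgroup.zpowers (φ r))) × α :=
    (Quotient.mk _ t.1, t.2)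
  let image (t : S) : G × α := (φ t.1.1, t.1.2)
  have factors : Function.FactorsThrough (fun t : S => c t) (coset ∘ image) := by
    rintro ⟨⟨e, x⟩, ht⟩ ⟨⟨e', x'⟩, ht'⟩ htt
    obtain ⟨hcoset, rfl : x = x'⟩ := Prod.ext_iff.1 htt
    obtain ⟨k, hk⟩ := hS _ ht' _ ht <| by
      rw [map_mul, map_inv]
      exact QuotientGroup.rightRel_apply.1 (Quotient.exact hcoset)
    obtain rfl : r ^ k * e = e' := (mul_inv_eq_iff_eq_mul.1 hk.symm).symm
    exact (hc k e x).symm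
  refine ⟨fun t => Function.extend (coset ∘ image) (fun t => c t) (fun _ => Classical.arbitrary β)
    (coset t), fun t ht k => ?_⟩
  have hcoset : coset (φ r ^ k * φ t.1, t.2) = coset (φ t.1, t.2) := by
    refine Prod.ext (Quotient.sound (QuotientGroup.rightRel_apply.2 ?_)) rfl
    simp [Subgroup.npow_mem_zpowers]
  simp only [hcoset]
  exact factors.extend_apply _ ⟨t, ht⟩

theorem exists_linearCombination_closedChain_eq {α G : Type*} [Group G] {φ : FreeGroup α →* G}
    {r : FreeGroup α} (hr : r ≠ 1)
    (hφ : ∀ t ∈ (foxChain r).support, ∀ t' ∈ (foxChain r).support,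
      φ (t.1 * t'.1⁻¹) ∈ Subgroup.zpowers (φ r) → t.1 * t'.1⁻¹ ∈ Subgroup.zpowers r) :
    ∃ c : G × α → ℤ, Finsupp.linearCombination ℤ c (closedChain φ r) = orderOf (φ r) := by
  obtain ⟨h, hh⟩ := exists_zpow_mul_eq_add (not_isOfFinOrder_of_isMulTorsionFree hr)
  -- The increment of `h` along an edge does not change under translation by `r`, hence descends to
  -- the edges of the closed path in `G`.
  let increment (t : FreeGroup α × α) : ℤ := h (t.1 * .of t.2) - h t.1
  obtain ⟨c, hc⟩ := exists_invariant_extension hφ (c := increment) fun k e x => by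
    simp only [increment, mul_assoc, hh]
    ring
  have hone : Finsupp.linearCombination ℤ increment (foxChain r) = 1 := by
    have hstep := hh 1 1
    rw [zpow_one, mul_one] at hstep
    rw [linearCombination_foxChain_sub, hstep]
    ring
  have period (k : ℕ) : Finsupp.linearCombination ℤ c
      ((foxChain r).mapDomain fun t => (φ r ^ k * φ t.1, t.2)) = 1 := by
    rw [Finsupp.linearCombination_mapDomain, ← hone, Finsupp.linearCombination_apply,
      Finsupp.linearCombination_apply]
    exact Finsupp.sum_congr fun t ht => congrArg _ (hc t ht k)
  exact ⟨c, by simp [closedChain, period]⟩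

end Nonvanishing

section RankInequality

open Module

variable {E : Type*} [NormedAddCommGroup E] [InnerProductSpace ℝ E]

theorem sq_trace_le_finrank_mul_trace_sq [FiniteDimensional ℝ E] {T : E →ₗ[ℝ] E}
    (hT : T.IsSymmetric) :
    LinearMap.trace ℝ E T ^ 2 ≤ finrank ℝ E * LinearMap.trace ℝ E (T * T) := by
  let b := stdOrthonormalBasis ℝ E
  have diagonal_le (i : Fin (finrank ℝ E)) : inner ℝ (b i) (T (b i)) ^ 2 ≤
      inner ℝ (b i) ((T * T) (b i)) := by
    rw [Module.End.mul_apply, ← hT (b i) (T (b i)), real_inner_self_eq_norm_sq, ← sq_abs]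
    gcongr
    simpa using abs_real_inner_le_norm (b i) (T (b i))
  calc LinearMap.trace ℝ E T ^ 2 = (∑ i, inner ℝ (b i) (T (b i))) ^ 2 := by
        rw [LinearMap.trace_eq_sum_inner T b]
    _ ≤ finrank ℝ E * ∑ i, inner ℝ (b i) (T (b i)) ^ 2 := by
        simpa using sq_sum_le_card_mul_sum_sq (s := Finset.univ)
          (f := fun i => inner ℝ (b i) (T (b i)))
    _ ≤ finrank ℝ E * ∑ i, inner ℝ (b i) ((T * T) (b i)) := by
        gcongr with i
        exact diagonal_le i
    _ = finrank ℝ E * LinearMap.trace ℝ E (T * T) := by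
        rw [LinearMap.trace_eq_sum_inner (T * T) b]

theorem sq_sum_mul_inner_self_le_finrank_mul {κ : Type*} [Fintype κ] (w : κ → ℝ) {v : κ → E}
    {U : Submodule ℝ E} [FiniteDimensional ℝ U] (hv : ∀ k, v k ∈ U) :
    (∑ k, w k * inner ℝ (v k) (v k)) ^ 2 ≤
      finrank ℝ U * ∑ k, ∑ l, w k * w l * inner ℝ (v k) (v l) ^ 2 := by
  let v' (k : κ) : U := ⟨v k, hv k⟩
  let P (k : κ) : U →ₗ[ℝ] U := InnerProductSpace.rankOne ℝ (v' k) (v' k)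
  have trace_P (k : κ) : LinearMap.trace ℝ U (P k) = inner ℝ (v k) (v k) :=
    InnerProductSpace.trace_rankOne _ _
  have trace_PP (k l : κ) : LinearMap.trace ℝ U (P k * P l) = inner ℝ (v k) (v l) ^ 2 := by
    have hcomp : P k * P l =
        (inner ℝ (v k) (v l) : ℝ) • (InnerProductSpace.rankOne ℝ (v' k) (v' l)).toLinearMap :=
      congrArg ContinuousLinearMap.toLinearMap
        (InnerProductSpace.rankOne_comp_rankOne (v' k) (v' k) (v' l) (v' l))
    rw [hcomp, map_smul, InnerProductSpace.trace_rankOne, real_inner_comm, smul_eq_mul, pow_two]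
    rfl
  have symmetric : (∑ k, w k • P k).IsSymmetric :=
    LinearMap.isSymmetric_sum _ fun k _ =>
      (InnerProductSpace.isSymmetric_rankOne_self (v' k)).smul rfl
  have htrace := sq_trace_le_finrank_mul_trace_sq symmetric
  simpa only [Finset.sum_mul_sum, smul_mul_smul_comm, map_sum, map_smul, trace_P, trace_PP,
    smul_eq_mul] using htrace

/-- The subspace spanned by the orbit of a vector under a group of isometries. -/
def orbitSpan {G : Type*} [Group G] (ρ : G →* (E ≃ₗᵢ[ℝ] E)) (z : E) : Submodule ℝ E :=
  Submodule.span ℝ (Set.range fun g => ρ g z)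

variable {G : Type*} [Group G] {ρ : G →* (E ≃ₗᵢ[ℝ] E)}

theorem map_mem_orbitSpan {y z : E} (hy : y ∈ orbitSpan ρ z) (g : G) : ρ g y ∈ orbitSpan ρ z := by
  have hle : orbitSpan ρ z ≤ (orbitSpan ρ z).comap (ρ g).toLinearEquiv.toLinearMap := by
    rw [orbitSpan, Submodule.span_le]
    rintro _ ⟨h, rfl⟩
    exact Submodule.subset_span ⟨g * h, by simp⟩
  exact hle hy

instance [Finite G] (z : E) : FiniteDimensional ℝ (orbitSpan ρ z) :=
  .span_of_finite ℝ (Set.finite_range _)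

theorem apply_eq_of_mem_zpowers {a g : G} {z : E} (ha : ρ a z = z)
    (hg : g ∈ Subgroup.zpowers a) : ρ g z = z := by
  rw [Subgroup.zpowers_eq_closure] at hg
  induction hg using Subgroup.closure_induction with
  | mem x hx => rwa [Set.mem_singleton_iff.1 hx]
  | one => simp
  | mul x y _ _ hx hy => simp [hx, hy]
  | inv x _ hx =>
    calc ρ x⁻¹ z = ρ x⁻¹ (ρ x z) := by rw [hx]
      _ = ρ (x⁻¹ * x) z := by rw [map_mul]; rfl
      _ = z := by simp

variable [Fintype G]

theorem finrank_orbitSpan_mul_orderOf_le {a : G} {z : E} (ha : ρ a z = z) :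
    finrank ℝ (orbitSpan ρ z) * orderOf a ≤ Fintype.card G := by
  classical
  let orbit : G ⧸ Subgroup.zpowers a → E := Quotient.lift (fun g => ρ g z) fun g h hgh => by
    have hmem := apply_eq_of_mem_zpowers ha (QuotientGroup.leftRel_apply.1 hgh)
    simpa using congrArg (ρ g) hmem.symm
  have hrange : Set.range orbit = Set.range fun g => ρ g z :=
    (QuotientGroup.mk_surjective.range_comp orbit).symm
  calc finrank ℝ (orbitSpan ρ z) * orderOf a
      ≤ Fintype.card (G ⧸ Subgroup.zpowers a) * Fintype.card (Subgroup.zpowers a) := by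
        rw [orbitSpan, ← hrange, Fintype.card_zpowers]
        gcongr
        exact finrank_range_le_card orbit
    _ = Fintype.card G := by
        simpa only [Nat.card_eq_fintype_card] using
          (Subgroup.zpowers a).card_eq_card_quotient_mul_card_subgroup.symm

theorem sum_sum_inner_sq_apply (y z : E) :
    ∑ g, ∑ h, inner ℝ (ρ g y) (ρ h z) ^ 2 = Fintype.card G * ∑ g, inner ℝ y (ρ g z) ^ 2 := by
  have translate (g : G) : ∑ h, inner ℝ (ρ g y) (ρ h z) ^ 2 = ∑ h, inner ℝ y (ρ h z) ^ 2 := by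
    rw [← Equiv.sum_comp (Equiv.mulLeft g) fun h => inner ℝ (ρ g y) (ρ h z) ^ 2]
    simp
  simp [translate]

section Family

open scoped Classical in
/-- A family of vectors `z i`, each fixed by `a i`, whose translates are nearly orthogonal: the
square sum of the inner products `⟪z i, ρ g (z j)⟫`, not counting the `g` in the cyclic group of
`a i` when `i = j`, is at most `ε * orderOf (a i) ^ 2 * orderOf (a j)`. The scale is fixed by the
lower bound on the norms. -/
structure NearlyOrthogonalOrbits {ι : Type*} (ρ : G →* (E ≃ₗᵢ[ℝ] E)) (a : ι → G) (z : ι → E)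
    (ε : ℝ) : Prop where
  nonneg : 0 ≤ ε
  apply_eq : ∀ i, ρ (a i) (z i) = z i
  orderOf_le : ∀ i, orderOf (a i) ≤ ‖z i‖ ^ 2
  sum_le : ∀ i j, ∑ g with i = j → g ∉ Subgroup.zpowers (a i), inner ℝ (z i) (ρ g (z j)) ^ 2 ≤
    ε * (orderOf (a i) ^ 2 * orderOf (a j))

namespace NearlyOrthogonalOrbits

variable {ι : Type*} {a : ι → G} {z : ι → E} {ε : ℝ}

theorem norm_pos (h : NearlyOrthogonalOrbits ρ a z ε) (i : ι) : 0 < ‖z i‖ := by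
  have hsq : (0 : ℝ) < ‖z i‖ ^ 2 :=
    (Nat.cast_pos.2 (orderOf_pos (a i))).trans_le (h.orderOf_le i)
  exact (norm_nonneg _).lt_of_ne' (sq_pos_iff.1 hsq)

open scoped Classical in
theorem sum_inner_sq_le (h : NearlyOrthogonalOrbits ρ a z ε) (i j : ι) :
    ∑ g, inner ℝ (z i) (ρ g (z j)) ^ 2 ≤
      (if i = j then orderOf (a i) * (‖z i‖ ^ 2) ^ 2 else 0) +
        ε * (orderOf (a i) ^ 2 * orderOf (a j)) := by
  rw [← Finset.sum_filter_not_add_sum_filter _ fun g => i = j → g ∉ Subgroup.zpowers (a i)]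
  gcongr ?_ + ?_
  · split_ifs with hij
    · subst hij
      have stabilized : ∀ g ∈ Finset.univ.filter fun g => g ∈ Subgroup.zpowers (a i),
          inner ℝ (z i) (ρ g (z i)) ^ 2 = (‖z i‖ ^ 2) ^ 2 := fun g hg => by
        rw [apply_eq_of_mem_zpowers (h.apply_eq i) (Finset.mem_filter.1 hg).2,
          real_inner_self_eq_norm_sq]
      simp only [true_imp_iff, not_not]
      rw [Finset.sum_congr rfl stabilized, Finset.sum_const, nsmul_eq_mul,
        ← Fintype.card_zpowers, Fintype.card_subtype]
    · simp [hij]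
  · exact h.sum_le i j

open scoped Classical in
theorem weighted_sum_inner_sq_le (h : NearlyOrthogonalOrbits ρ a z ε) (i j : ι) :
    (orderOf (a i) * ‖z i‖ ^ 2)⁻¹ * (orderOf (a j) * ‖z j‖ ^ 2)⁻¹ *
        ∑ g, inner ℝ (z i) (ρ g (z j)) ^ 2 ≤
      (if i = j then (orderOf (a i) : ℝ)⁻¹ else 0) + ε * (orderOf (a j) : ℝ)⁻¹ := by
  let n (i : ι) : ℝ := orderOf (a i)
  have hn (i : ι) : 0 < n i := Nat.cast_pos.2 (orderOf_pos (a i))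
  have := hn i
  have := hn j
  have := h.norm_pos i
  have := h.nonneg
  have error_le : (n i * ‖z i‖ ^ 2)⁻¹ * (n j * ‖z j‖ ^ 2)⁻¹ * (ε * (n i ^ 2 * n j)) ≤
      ε * (n j)⁻¹ := by
    calc (n i * ‖z i‖ ^ 2)⁻¹ * (n j * ‖z j‖ ^ 2)⁻¹ * (ε * (n i ^ 2 * n j))
        ≤ (n i * n i)⁻¹ * (n j * n j)⁻¹ * (ε * (n i ^ 2 * n j)) := by
          gcongr
          exacts [h.orderOf_le i, h.orderOf_le j]
      _ = ε * (n j)⁻¹ := by field_simp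
  refine (mul_le_mul_of_nonneg_left (h.sum_inner_sq_le i j) (by positivity)).trans ?_
  rw [mul_add]
  gcongr ?_ + ?_
  · split_ifs with hij
    · subst hij
      exact le_of_eq (by field_simp)
    · simp

variable [Fintype ι]

theorem sum_weighted_sum_inner_sq_le (h : NearlyOrthogonalOrbits ρ a z ε) :
    ∑ i, ∑ j, (orderOf (a i) * ‖z i‖ ^ 2)⁻¹ * (orderOf (a j) * ‖z j‖ ^ 2)⁻¹ *
        ∑ g, inner ℝ (z i) (ρ g (z j)) ^ 2 ≤
      (∑ i, (orderOf (a i) : ℝ)⁻¹) * (1 + Fintype.card ι * ε) := by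
  classical
  calc _ ≤ ∑ i, ∑ j, ((if i = j then (orderOf (a i) : ℝ)⁻¹ else 0) +
          ε * (orderOf (a j) : ℝ)⁻¹) := by
        gcongr with i _ j
        exact h.weighted_sum_inner_sq_le i j
    _ = (∑ i, (orderOf (a i) : ℝ)⁻¹) * (1 + Fintype.card ι * ε) := by
        simp only [Finset.sum_add_distrib, Finset.sum_ite_eq, Finset.mem_univ, if_true,
          Finset.sum_const, Finset.card_univ, nsmul_eq_mul, ← Finset.mul_sum]
        ring

theorem card_mul_sum_inv_orderOf_le [Nonempty ι] (h : NearlyOrthogonalOrbits ρ a z ε)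
    {U : Submodule ℝ E} [FiniteDimensional ℝ U] (hU : ∀ i g, ρ g (z i) ∈ U) :
    Fintype.card G * ∑ i, (orderOf (a i) : ℝ)⁻¹ ≤ finrank ℝ U * (1 + Fintype.card ι * ε) := by
  -- With these weights the orbit of `z i` contributes `Fintype.card G / orderOf (a i)`, an upper
  -- bound for the dimension of its span, to the trace of the weighted sum of rank one operators.
  let w (i : ι) : ℝ := (orderOf (a i) * ‖z i‖ ^ 2)⁻¹
  let S : ℝ := ∑ i, (orderOf (a i) : ℝ)⁻¹
  have hn (i : ι) : (0 : ℝ) < orderOf (a i) := Nat.cast_pos.2 (orderOf_pos (a i))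
  have hS : 0 < S := Finset.sum_pos (fun i _ => inv_pos.2 (hn i)) Finset.univ_nonempty
  have htrace : ∑ k : ι × G, w k.1 * inner ℝ (ρ k.2 (z k.1)) (ρ k.2 (z k.1)) =
      Fintype.card G * S := by
    have weight_mul (i : ι) : w i * ‖z i‖ ^ 2 = (orderOf (a i) : ℝ)⁻¹ := by
      have := h.norm_pos i
      simp only [w]
      field_simp
    simp [Fintype.sum_prod_type, weight_mul, S, Finset.mul_sum]
  have hgram : ∑ k : ι × G, ∑ l : ι × G,
      w k.1 * w l.1 * inner ℝ (ρ k.2 (z k.1)) (ρ l.2 (z l.1)) ^ 2 =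
      Fintype.card G * ∑ i, ∑ j, w i * w j * ∑ g, inner ℝ (z i) (ρ g (z j)) ^ 2 := by
    simp only [Fintype.sum_prod_type, Finset.mul_sum (Finset.univ : Finset ι)]
    refine Finset.sum_congr rfl fun i _ => ?_
    rw [Finset.sum_comm]
    refine Finset.sum_congr rfl fun j _ => ?_
    simp only [← Finset.mul_sum, sum_sum_inner_sq_apply]
    ring
  have hrank := sq_sum_mul_inner_self_le_finrank_mul (fun k : ι × G => w k.1)
    (v := fun k => ρ k.2 (z k.1)) (U := U) fun k => hU k.1 k.2
  rw [htrace, hgram] at hrank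
  have hG : (0 : ℝ) < Fintype.card G := Nat.cast_pos.2 Fintype.card_pos
  refine le_of_mul_le_mul_right ?_ (mul_pos hG hS)
  calc Fintype.card G * S * (Fintype.card G * S)
      ≤ finrank ℝ U * (Fintype.card G * (S * (1 + Fintype.card ι * ε))) := by
        rw [← pow_two]
        refine hrank.trans ?_
        gcongr
        exact h.sum_weighted_sum_inner_sq_le
    _ = finrank ℝ U * (1 + Fintype.card ι * ε) * (Fintype.card G * S) := by ring

theorem exists_notMem_orbitSpan (h : NearlyOrthogonalOrbits ρ a z ε)
    (hcard : 1 + Fintype.card ι * ε < Fintype.card ι) :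
    ∃ i j, z i ∉ orbitSpan ρ (z j) := by
  by_contra! hmem
  have := h.nonneg
  have : Nonempty ι := by
    rw [← Fintype.card_pos_iff, ← Nat.cast_pos (α := ℝ)]
    exact lt_of_le_of_lt (by positivity) hcard
  let S : ℝ := ∑ i, (orderOf (a i) : ℝ)⁻¹
  have hn (i : ι) : (0 : ℝ) < orderOf (a i) := Nat.cast_pos.2 (orderOf_pos (a i))
  have hS : 0 < S := Finset.sum_pos (fun i _ => inv_pos.2 (hn i)) Finset.univ_nonempty
  have hG : (0 : ℝ) < Fintype.card G := Nat.cast_pos.2 Fintype.card_pos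
  have sum_inv_le (j : ι) : S ≤ (orderOf (a j) : ℝ)⁻¹ * (1 + Fintype.card ι * ε) := by
    have hlower : Fintype.card G * S ≤
        finrank ℝ (orbitSpan ρ (z j)) * (1 + Fintype.card ι * ε) :=
      h.card_mul_sum_inv_orderOf_le fun i g => map_mem_orbitSpan (hmem i j) g
    have hupper : (finrank ℝ (orbitSpan ρ (z j)) : ℝ) ≤ Fintype.card G * (orderOf (a j) : ℝ)⁻¹ := by
      rw [← div_eq_mul_inv, le_div_iff₀ (hn j)]
      exact_mod_cast finrank_orbitSpan_mul_orderOf_le (h.apply_eq j)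
    refine le_of_mul_le_mul_left (hlower.trans ?_) hG
    rw [← mul_assoc]
    gcongr
  have hsum : Fintype.card ι * S ≤ (1 + Fintype.card ι * ε) * S := by
    calc Fintype.card ι * S = ∑ _j : ι, S := by simp
      _ ≤ ∑ j, (orderOf (a j) : ℝ)⁻¹ * (1 + Fintype.card ι * ε) := by
          gcongr with j
          exact sum_inv_le j
      _ = (1 + Fintype.card ι * ε) * S := by rw [← Finset.sum_mul, mul_comm]
  exact hcard.not_ge (le_of_mul_le_mul_right hsum hS)

end NearlyOrthogonalOrbits

end Family

end RankInequality

section Counting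

variable {G : Type*} [Group G]

open scoped Classical in
/-- The exponents `(k, l)`, up to the orders of `a` and `b`, that represent `g` in the double coset
of `q` with respect to the cyclic groups of `a` and `b`. -/
noncomputable def doubleCosetExponents (a b q g : G) : Finset (ℕ × ℕ) :=
  {p ∈ Finset.range (orderOf a) ×ˢ Finset.range (orderOf b) | a ^ p.1 * q * (b ^ p.2)⁻¹ = g}

variable {a b q g : G}

theorem mem_doubleCosetExponents {p : ℕ × ℕ} : p ∈ doubleCosetExponents a b q g ↔
    p.1 < orderOf a ∧ p.2 < orderOf b ∧ a ^ p.1 * q * (b ^ p.2)⁻¹ = g := by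
  simp [doubleCosetExponents, and_assoc]

theorem doubleCosetExponents_eq_empty (hq : q ∈ Subgroup.zpowers a) (hg : g ∉ Subgroup.zpowers a) :
    doubleCosetExponents a a q g = ∅ := by
  refine Finset.eq_empty_of_forall_notMem fun p hp => hg ?_
  rw [← (mem_doubleCosetExponents.1 hp).2.2]
  exact mul_mem (mul_mem (Subgroup.npow_mem_zpowers a _) hq)
    (inv_mem (Subgroup.npow_mem_zpowers a _))

theorem eq_and_eq_of_mem_doubleCosetExponents {D : ℕ}
    (hD : ∀ d, 0 < d → d < D → ¬ Commute (a ^ d) (q * b * q⁻¹)) {d d' : ℕ} {p p' : ℕ × ℕ}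
    (hd' : d' < D) (hp : p ∈ doubleCosetExponents a b q g)
    (hp' : p' ∈ doubleCosetExponents a b q g) (hdd' : d ≤ d')
    (h : a ^ (d + p.1) = a ^ (d' + p'.1)) : d = d' ∧ p = p' := by
  obtain ⟨hk, hl, hg⟩ := mem_doubleCosetExponents.1 hp
  obtain ⟨hk', hl', hg'⟩ := mem_doubleCosetExponents.1 hp'
  obtain ⟨e, rfl⟩ := Nat.exists_eq_add_of_le hdd'
  have hpow : a ^ p.1 = a ^ p'.1 * a ^ e := by
    rw [add_assoc, pow_add, pow_add a d] at h
    rw [mul_left_cancel h, pow_add, pow_mul_comm]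
  have hconj : a ^ e = q * ((b ^ p'.2)⁻¹ * b ^ p.2) * q⁻¹ := by
    rw [← hg', hpow, mul_assoc, mul_assoc, mul_assoc, mul_right_inj] at hg
    rw [← mul_assoc, ← hg]
    group
  obtain rfl : e = 0 := by
    by_contra he
    refine hD e (Nat.pos_of_ne_zero he) (by omega) ?_
    rw [hconj, Commute.conj_iff]
    exact ((Commute.refl b).pow_left _).inv_left.mul_left ((Commute.refl b).pow_left _)
  have hfst : p.1 = p'.1 := pow_injOn_Iio_orderOf hk hk' (by simpa using hpow)
  have hsnd : p.2 = p'.2 := pow_injOn_Iio_orderOf hl hl' (by simpa [hfst] using hg.trans hg'.symm)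
  exact ⟨rfl, Prod.ext hfst hsnd⟩

theorem mul_card_doubleCosetExponents_le {D : ℕ}
    (hD : ∀ d, 0 < d → d < D → ¬ Commute (a ^ d) (q * b * q⁻¹)) [Finite G] :
    D * (doubleCosetExponents a b q g).card ≤ orderOf a := by
  classical
  rw [← Finset.card_range D, ← Finset.card_product, ← Finset.card_range (orderOf a)]
  refine Finset.card_le_card_of_injOn (fun t => (t.1 + t.2.1) % orderOf a)
    (fun t _ => Finset.mem_coe.2 <| Finset.mem_range.2 <| Nat.mod_lt _ (orderOf_pos a)) ?_
  rintro ⟨d, p⟩ hdp ⟨d', p'⟩ hdp' h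
  simp only [Finset.coe_product, Set.mem_prod, Finset.mem_coe, Finset.mem_range] at hdp hdp'
  have hpow : a ^ (d + p.1) = a ^ (d' + p'.1) := pow_inj_mod.2 h
  rcases le_total d d' with hdd | hdd
  · obtain ⟨rfl, rfl⟩ := eq_and_eq_of_mem_doubleCosetExponents hD hdp'.1 hdp.2 hdp'.2 hdd hpow
    rfl
  · obtain ⟨rfl, rfl⟩ :=
      eq_and_eq_of_mem_doubleCosetExponents hD hdp.1 hdp'.2 hdp.2 hdd hpow.symm
    rfl

variable [Fintype G]

theorem sum_card_doubleCosetExponents :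
    ∑ g, (doubleCosetExponents a b q g).card = orderOf a * orderOf b := by
  classical
  rw [← Finset.card_range (orderOf a), ← Finset.card_range (orderOf b), ← Finset.card_product]
  exact (Finset.card_eq_sum_card_fiberwise fun _ _ => Finset.mem_coe.2 (Finset.mem_univ _)).symm

theorem mul_sum_sq_card_doubleCosetExponents_le {D : ℕ}
    (hD : ∀ d, 0 < d → d < D → ¬ Commute (a ^ d) (q * b * q⁻¹)) :
    D * ∑ g, (doubleCosetExponents a b q g).card ^ 2 ≤ orderOf a ^ 2 * orderOf b := by
  calc D * ∑ g, (doubleCosetExponents a b q g).card ^ 2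
      = ∑ g, D * (doubleCosetExponents a b q g).card * (doubleCosetExponents a b q g).card := by
        simp only [Finset.mul_sum, pow_two, mul_assoc]
    _ ≤ ∑ g, orderOf a * (doubleCosetExponents a b q g).card := by
        gcongr
        exact mul_card_doubleCosetExponents_le hD
    _ = orderOf a ^ 2 * orderOf b := by
        rw [← Finset.mul_sum, sum_card_doubleCosetExponents, pow_two, mul_assoc]

end Counting

section EuclideanChains

section PeriodSum

variable {E : Type*} [NormedAddCommGroup E] [InnerProductSpace ℝ E]
variable {G : Type*} [Group G] (ρ : G →* (E ≃ₗᵢ[ℝ] E)) (a : G)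

/-- The sum of the translates of a vector by the powers of a group element. -/
noncomputable def periodSum : E →ₗ[ℝ] E :=
  ∑ k ∈ Finset.range (orderOf a), (ρ (a ^ k)).toLinearEquiv.toLinearMap

variable (v : E)

theorem periodSum_apply : periodSum ρ a v = ∑ k ∈ Finset.range (orderOf a), ρ (a ^ k) v := by
  simp [periodSum]

theorem map_periodSum : ρ a (periodSum ρ a v) = periodSum ρ a v := by
  have shift := Finset.sum_range_succ' (fun k => ρ (a ^ k) v) (orderOf a)
  rw [Finset.sum_range_succ, pow_orderOf_eq_one, pow_zero, add_left_inj] at shift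
  rw [periodSum_apply, map_sum]
  simpa only [pow_succ', map_mul, LinearIsometryEquiv.coe_mul, Function.comp_apply] using shift.symm

theorem inner_periodSum_self :
    inner ℝ (periodSum ρ a v) (periodSum ρ a v) = orderOf a * inner ℝ (periodSum ρ a v) v := by
  have fixed (k : ℕ) : ρ (a ^ k) (periodSum ρ a v) = periodSum ρ a v := by
    induction k with
    | zero => simp
    | succ k ih =>
      rw [pow_succ, map_mul, LinearIsometryEquiv.coe_mul, Function.comp_apply, map_periodSum, ih]
  have term (k : ℕ) : inner ℝ (periodSum ρ a v) (ρ (a ^ k) v) = inner ℝ (periodSum ρ a v) v := by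
    rw [← LinearIsometryEquiv.inner_map_map (ρ (a ^ k)) (periodSum ρ a v) v, fixed]
  nth_rw 2 [periodSum_apply]
  simp only [inner_sum, term, Finset.sum_const, Finset.card_range, nsmul_eq_mul]

end PeriodSum

variable {X : Type*}

/-- An integral chain as a vector of Euclidean space. -/
noncomputable def chainVector : (X →₀ ℤ) →ₗ[ℤ] EuclideanSpace ℝ X where
  toFun f := WithLp.toLp 2 fun t => f t
  map_add' f f' := by
    ext t
    simp
  map_smul' n f := by
    ext t
    simp

theorem chainVector_single_apply [DecidableEq X] (x y : X) :
    chainVector (Finsupp.single x 1) y = if x = y then 1 else 0 := by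
  simp [chainVector, Finsupp.single_apply]

theorem inner_chainVector [Fintype X] (x : EuclideanSpace ℝ X) (f : X →₀ ℤ) :
    inner ℝ x (chainVector f) = Finsupp.linearCombination ℤ (fun t => x t) f := by
  simp [PiLp.inner_apply, chainVector, Finsupp.linearCombination_apply, Finsupp.sum_fintype]

variable {G α : Type*} [Group G] [Fintype G] [Fintype α]

/-- The action of `G` by left translation on the real chains of its Cayley graph. -/
noncomputable def translation :
    G →* (EuclideanSpace ℝ (G × α) ≃ₗᵢ[ℝ] EuclideanSpace ℝ (G × α)) where
  toFun g := LinearIsometryEquiv.piLpCongrLeft 2 ℝ ℝ ((Equiv.mulLeft g).prodCongr (.refl α))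
  map_one' := by
    ext x t
    change x ((1 : G)⁻¹ * t.1, t.2) = x t
    simp
  map_mul' g h := by
    ext x t
    change x ((g * h)⁻¹ * t.1, t.2) = x (h⁻¹ * (g⁻¹ * t.1), t.2)
    rw [mul_inv_rev, mul_assoc]

theorem translation_chainVector (g : G) (f : G × α →₀ ℤ) :
    translation g (chainVector f) = chainVector (f.mapDomain fun t => (g * t.1, t.2)) := by
  ext t
  exact congrArg Int.cast
    (Finsupp.mapDomain_equiv_apply (f := (Equiv.mulLeft g).prodCongr (.refl α)) f t).symm

variable (φ : FreeGroup α →* G) (w : FreeGroup α)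

theorem chainVector_closedChain : chainVector (closedChain φ w) =
    periodSum translation (φ w) (chainVector ((foxChain w).mapDomain fun t => (φ t.1, t.2))) := by
  simp only [closedChain, map_sum, periodSum_apply, translation_chainVector,
    ← Finsupp.mapDomain_comp, Function.comp_def]

theorem orderOf_le_norm_sq_chainVector_closedChain (h : closedChain φ w ≠ 0) :
    orderOf (φ w) ≤ ‖chainVector (closedChain φ w)‖ ^ 2 := by
  let f : G × α →₀ ℤ := (foxChain w).mapDomain fun t => (φ t.1, t.2)
  let N : ℤ := Finsupp.linearCombination ℤ (closedChain φ w) f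
  have hN : ‖chainVector (closedChain φ w)‖ ^ 2 = orderOf (φ w) * N := by
    rw [← real_inner_self_eq_norm_sq, chainVector_closedChain, inner_periodSum_self,
      ← chainVector_closedChain, inner_chainVector]
    simp [N, chainVector, Finsupp.linearCombination_apply, Finsupp.sum, f]
  have hz : chainVector (closedChain φ w) ≠ 0 := fun hzero => h <| by
    ext t
    exact Int.cast_eq_zero.1 (congrArg (· t) hzero : (closedChain φ w t : ℝ) = 0)
  have hn : (0 : ℝ) < orderOf (φ w) := Nat.cast_pos.2 (orderOf_pos _)
  have hpos : 0 < N := by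
    have := hN ▸ pow_pos (norm_pos_iff.2 hz) 2
    exact_mod_cast pos_of_mul_pos_right this hn.le
  rw [hN]
  exact le_mul_of_one_le_right hn.le (by exact_mod_cast hpos)

theorem abs_inner_periodSum_single_le (a b g : G) (p p' : G × α) :
    |inner ℝ (periodSum translation a (chainVector (Finsupp.single p 1)))
      (translation g (periodSum translation b (chainVector (Finsupp.single p' 1))))| ≤
      (doubleCosetExponents a b (p.1 * p'.1⁻¹) g).card := by
  classical
  have represents {k l : ℕ} (h : (a ^ k * p.1, p.2) = (g * (b ^ l * p'.1), p'.2)) :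
      a ^ k * (p.1 * p'.1⁻¹) * (b ^ l)⁻¹ = g := by
    replace h : a ^ k * p.1 = g * (b ^ l * p'.1) := congrArg Prod.fst h
    rw [← mul_assoc, h]
    group
  calc _ = |∑ l ∈ Finset.range (orderOf b), ∑ k ∈ Finset.range (orderOf a),
        if (a ^ k * p.1, p.2) = (g * (b ^ l * p'.1), p'.2) then (1 : ℝ) else 0| := by
        simp only [periodSum_apply, map_sum, sum_inner, inner_sum, translation_chainVector,
          Finsupp.mapDomain_single, inner_chainVector, Finsupp.linearCombination_single, one_smul,
          chainVector_single_apply]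
    _ ≤ ∑ l ∈ Finset.range (orderOf b), ∑ k ∈ Finset.range (orderOf a),
        if a ^ k * (p.1 * p'.1⁻¹) * (b ^ l)⁻¹ = g then (1 : ℝ) else 0 := by
        rw [abs_of_nonneg (by positivity)]
        gcongr with l _ k
        split_ifs with h h'
        exacts [le_rfl, (h' (represents h)).elim, zero_le_one, le_rfl]
    _ = (doubleCosetExponents a b (p.1 * p'.1⁻¹) g).card := by
        rw [doubleCosetExponents, Finset.card_filter, Finset.sum_product_right]
        push_cast
        rfl

theorem abs_inner_closedChain_le (r s : FreeGroup α) (g : G) :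
    |inner ℝ (chainVector (closedChain φ r)) (translation g (chainVector (closedChain φ s)))| ≤
      ∑ t ∈ (foxChain r).support ×ˢ (foxChain s).support,
        |(foxChain r t.1 : ℝ)| * |(foxChain s t.2 : ℝ)| *
          (doubleCosetExponents (φ r) (φ s) (φ (t.1.1 * t.2.1⁻¹)) g).card := by
  classical
  have expand (w : FreeGroup α) : chainVector (closedChain φ w) =
      ∑ t ∈ (foxChain w).support, (foxChain w t : ℝ) •
        periodSum translation (φ w) (chainVector (Finsupp.single (φ t.1, t.2) 1)) := by
    rw [chainVector_closedChain, Finsupp.mapDomain, Finsupp.sum, map_sum, map_sum]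
    refine Finset.sum_congr rfl fun t _ => ?_
    rw [← map_smul, Int.cast_smul_eq_zsmul, ← map_zsmul, Finsupp.smul_single, smul_eq_mul, mul_one]
  rw [expand, expand, map_sum, sum_inner, Finset.sum_product]
  refine (Finset.abs_sum_le_sum_abs _ _).trans <| Finset.sum_le_sum fun t _ => ?_
  rw [inner_sum]
  refine (Finset.abs_sum_le_sum_abs _ _).trans <| Finset.sum_le_sum fun t' _ => ?_
  rw [map_smul, real_inner_smul_left, real_inner_smul_right, ← mul_assoc, abs_mul, abs_mul,
    map_mul, map_inv]
  gcongr
  exact abs_inner_periodSum_single_le _ _ _ _ _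

theorem sum_sq_sum_mul_le {κ ι : Type*} {K : Finset κ} {s : Finset ι} {c : κ → ℝ} {τ : κ → ι → ℝ}
    {M : ℝ} (hc : ∀ k ∈ K, 0 ≤ c k) (hM : ∀ k ∈ K, ∑ i ∈ s, τ k i ^ 2 ≤ M) :
    ∑ i ∈ s, (∑ k ∈ K, c k * τ k i) ^ 2 ≤ (∑ k ∈ K, c k) ^ 2 * M := by
  calc ∑ i ∈ s, (∑ k ∈ K, c k * τ k i) ^ 2
      ≤ ∑ i ∈ s, (∑ k ∈ K, c k) * ∑ k ∈ K, c k * τ k i ^ 2 := by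
        gcongr with i
        exact Finset.sum_sq_le_sum_mul_sum_of_sq_le_mul _ hc
          (fun k hk => mul_nonneg (hc k hk) (sq_nonneg _)) fun k _ => (by ring : _ = _).le
    _ = (∑ k ∈ K, c k) * ∑ k ∈ K, c k * ∑ i ∈ s, τ k i ^ 2 := by
        rw [← Finset.mul_sum, Finset.sum_comm]
        simp only [Finset.mul_sum]
    _ ≤ (∑ k ∈ K, c k) * ∑ k ∈ K, c k * M := by
        gcongr with k hk
        exacts [Finset.sum_nonneg hc, hc k hk, hM k hk]
    _ = (∑ k ∈ K, c k) ^ 2 * M := by rw [← Finset.sum_mul, pow_two, mul_assoc]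

theorem sum_sq_inner_closedChain_le {r s : FreeGroup α} {S : Finset G} {D : ℕ} (hD : 0 < D)
    (h : ∀ t ∈ (foxChain r).support, ∀ t' ∈ (foxChain s).support,
      (∀ g ∈ S, doubleCosetExponents (φ r) (φ s) (φ (t.1 * t'.1⁻¹)) g = ∅) ∨
      ∀ d, 0 < d → d < D →
        ¬ Commute (φ r ^ d) (φ (t.1 * t'.1⁻¹) * φ s * (φ (t.1 * t'.1⁻¹))⁻¹)) :
    ∑ g ∈ S, inner ℝ (chainVector (closedChain φ r))
        (translation g (chainVector (closedChain φ s))) ^ 2 ≤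
      ((foxChain r).sum (fun _ n => |(n : ℝ)|) * (foxChain s).sum fun _ n => |(n : ℝ)|) ^ 2 *
        (orderOf (φ r) ^ 2 * orderOf (φ s) / D) := by
  have hD' : (0 : ℝ) < D := Nat.cast_pos.2 hD
  have count_le : ∀ t ∈ (foxChain r).support ×ˢ (foxChain s).support,
      ∑ g ∈ S, ((doubleCosetExponents (φ r) (φ s) (φ (t.1.1 * t.2.1⁻¹)) g).card : ℝ) ^ 2 ≤
        orderOf (φ r) ^ 2 * orderOf (φ s) / D := by
    intro t ht
    obtain ⟨ht₁, ht₂⟩ := Finset.mem_product.1 ht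
    rcases h t.1 ht₁ t.2 ht₂ with hempty | hcomm
    · rw [Finset.sum_eq_zero fun g hg => by rw [hempty g hg, Finset.card_empty, Nat.cast_zero,
        zero_pow two_ne_zero]]
      positivity
    · rw [le_div_iff₀' hD']
      refine (mul_le_mul_of_nonneg_left (Finset.sum_le_univ_sum_of_nonneg fun g => sq_nonneg _)
        hD'.le).trans ?_
      exact_mod_cast mul_sum_sq_card_doubleCosetExponents_le hcomm
  calc _ ≤ ∑ g ∈ S, (∑ t ∈ (foxChain r).support ×ˢ (foxChain s).support,
        |(foxChain r t.1 : ℝ)| * |(foxChain s t.2 : ℝ)| *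
          (doubleCosetExponents (φ r) (φ s) (φ (t.1.1 * t.2.1⁻¹)) g).card) ^ 2 := by
        gcongr ∑ g ∈ S, ?_ with g
        exact sq_le_sq' (abs_le.1 (abs_inner_closedChain_le φ r s g)).1
          (abs_le.1 (abs_inner_closedChain_le φ r s g)).2
    _ ≤ _ := sum_sq_sum_mul_le (fun t _ => by positivity) count_le
    _ = _ := by simp only [Finsupp.sum, Finset.sum_mul_sum, Finset.sum_product]

end EuclideanChains

section Separation

universe u

variable {α : Type u} {ι : Type*} {r : ι → FreeGroup α}

theorem not_commute_pow_conj (hroot : ∀ i, IsRoot (r i))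
    (hconj : Pairwise fun i j => ¬ IsConj (r i) (r j) ∧ ¬ IsConj (r i) (r j)⁻¹) {i j : ι}
    {q : FreeGroup α} (hq : i = j → q ∉ Subgroup.zpowers (r i)) {d : ℕ} (hd : d ≠ 0) :
    ¬ Commute (r i ^ d) (q * r j * q⁻¹) := by
  intro hcomm
  have heq := (hroot i).eq_or_eq_inv_of_commute_pow ((hroot j).conj q) hd hcomm
  rcases eq_or_ne i j with rfl | hij
  · exact hq rfl ((hroot i).mem_zpowers_of_conj_eq heq)
  · rcases heq with heq | heq
    · exact (hconj hij).1 (isConj_comm.1 (isConj_iff.2 ⟨q, heq.symm⟩))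
    · exact (hconj hij).2 (isConj_comm.1 (isConj_iff.2 ⟨q, by rw [heq]; group⟩))

/-- A homomorphism `φ` separates the axes of the `r i` up to depth `D` if, for `0 < d < D`, the
images of `r i ^ d` and of the conjugates `q * r j * q⁻¹` do not commute. Here `q` runs through the
translations that take the start of an edge on the path reading `r j` to that of an edge on the path
reading `r i`; those that stabilize the axis of `r i` are left out when `i = j`. -/
def SeparatesAxes {G : Type*} [Group G] (φ : FreeGroup α →* G) (r : ι → FreeGroup α) (D : ℕ) :
    Prop :=
  ∀ i j, ∀ t ∈ (foxChain (r i)).support, ∀ t' ∈ (foxChain (r j)).support,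
    (i = j → t.1 * t'.1⁻¹ ∉ Subgroup.zpowers (r i)) → ∀ d, 0 < d → d < D →
      ¬ Commute (φ (r i) ^ d) (φ (t.1 * t'.1⁻¹) * φ (r j) * (φ (t.1 * t'.1⁻¹))⁻¹)

theorem exists_separatesAxes [Finite ι] (hroot : ∀ i, IsRoot (r i))
    (hconj : Pairwise fun i j => ¬ IsConj (r i) (r j) ∧ ¬ IsConj (r i) (r j)⁻¹) (D : ℕ) :
    ∃ (G : Type u) (_ : Group G) (_ : Finite G) (φ : FreeGroup α →* G), SeparatesAxes φ r D := by
  classical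
  have := Fintype.ofFinite ι
  let S : Finset (FreeGroup α × α) := Finset.univ.biUnion fun i => (foxChain (r i)).support
  let pairs : Finset (FreeGroup α × FreeGroup α) :=
    ((Finset.univ : Finset (ι × ι)) ×ˢ S ×ˢ S ×ˢ Finset.range D).image fun p =>
      (r p.1.1 ^ p.2.2.2, p.2.1.1 * p.2.2.1.1⁻¹ * r p.1.2 * (p.2.1.1 * p.2.2.1.1⁻¹)⁻¹)
  obtain ⟨G, _, _, φ, hφ⟩ := exists_finite_hom_forall_not_commute
    (pairs.filter fun p => ¬ Commute p.1 p.2) fun p hp => (Finset.mem_filter.1 hp).2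
  refine ⟨G, _, inferInstance, φ, fun i j t ht t' ht' hq d hd hdD => ?_⟩
  have mem_S {k : ι} {e : FreeGroup α × α} (he : e ∈ (foxChain (r k)).support) : e ∈ S :=
    Finset.mem_biUnion.2 ⟨k, Finset.mem_univ k, he⟩
  have hmem : (r i ^ d, t.1 * t'.1⁻¹ * r j * (t.1 * t'.1⁻¹)⁻¹) ∈ pairs :=
    Finset.mem_image.2 ⟨((i, j), t, t', d), by simp [mem_S ht, mem_S ht', hdD], rfl⟩
  have := hφ _ (Finset.mem_filter.2 ⟨hmem, not_commute_pow_conj hroot hconj hq hd.ne'⟩)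
  simpa only [map_pow, map_mul, map_inv] using this

variable {G : Type*} [Group G] {φ : FreeGroup α →* G} {D : ℕ}

theorem SeparatesAxes.exists_linearCombination_closedChain_eq (hφ : SeparatesAxes φ r D)
    (hD : 1 < D) {i : ι} (hi : r i ≠ 1) :
    ∃ c : G × α → ℤ, Finsupp.linearCombination ℤ c (closedChain φ (r i)) = orderOf (φ (r i)) := by
  refine _root_.exists_linearCombination_closedChain_eq hi fun t ht t' ht' hmem => ?_
  by_contra hq
  refine hφ i i t ht t' ht' (fun _ => hq) 1 one_pos hD ?_
  obtain ⟨k, hk : φ (r i) ^ k = _⟩ := hmem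
  rw [← hk, pow_one]
  have hcomm := Commute.self_zpow (φ (r i)) k
  exact (hcomm.mul_right (.refl _)).mul_right hcomm.inv_right

theorem SeparatesAxes.nearlyOrthogonalOrbits [Fintype ι] [Fintype G] [Fintype α]
    (hφ : SeparatesAxes φ r D) (hD : 1 < D) (hr : ∀ i, r i ≠ 1) :
    NearlyOrthogonalOrbits translation (fun i => φ (r i))
      (fun i => chainVector (closedChain φ (r i)))
      ((∑ i, (foxChain (r i)).sum fun _ n => |(n : ℝ)|) ^ 4 / D) := by
  classical
  let ℓ (i : ι) : ℝ := (foxChain (r i)).sum fun _ n => |(n : ℝ)|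
  have ℓ_nonneg (i : ι) : 0 ≤ ℓ i := Finset.sum_nonneg fun _ _ => abs_nonneg _
  have ℓ_le (i : ι) : ℓ i ≤ ∑ i, ℓ i :=
    Finset.single_le_sum (fun i _ => ℓ_nonneg i) (Finset.mem_univ i)
  refine ⟨by positivity, fun i => ?_, fun i => ?_, fun i j => ?_⟩
  · rw [chainVector_closedChain, map_periodSum]
  · refine orderOf_le_norm_sq_chainVector_closedChain φ (r i) fun hzero => ?_
    obtain ⟨c, hc⟩ := hφ.exists_linearCombination_closedChain_eq hD (hr i)
    rw [hzero, map_zero] at hc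
    exact (orderOf_pos (φ (r i))).ne' (by exact_mod_cast hc.symm)
  · refine (sum_sq_inner_closedChain_le φ (by omega : 0 < D) fun t ht t' ht' => ?_).trans ?_
    · by_cases hq : i = j → t.1 * t'.1⁻¹ ∉ Subgroup.zpowers (r i)
      · exact .inr (hφ i j t ht t' ht' hq)
      · push Not at hq
        obtain ⟨rfl, hq⟩ := hq
        refine .inl fun g hg => doubleCosetExponents_eq_empty ?_ ((Finset.mem_filter.1 hg).2 rfl)
        exact MonoidHom.map_zpowers φ (r i) ▸ Subgroup.mem_map_of_mem φ hq
    · rw [← mul_div_assoc, mul_div_right_comm]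
      gcongr
      calc (ℓ i * ℓ j) ^ 2 ≤ ((∑ i, ℓ i) * ∑ i, ℓ i) ^ 2 := by
            have := mul_nonneg (ℓ_nonneg i) (ℓ_nonneg j)
            have := (ℓ_nonneg i).trans (ℓ_le i)
            gcongr
            exacts [ℓ_nonneg j, ℓ_le i, ℓ_le j]
        _ = (∑ i, ℓ i) ^ 4 := by ring

end Separation

section OrderSeparability

theorem exists_linearCombination_eq_zero_of_chainVector_notMem {X : Type*} [Finite X]
    {U : Submodule ℝ (EuclideanSpace ℝ X)} {f : X →₀ ℤ} (hf : chainVector f ∉ U) :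
    ∃ c : X → ℤ, (∀ f', chainVector f' ∈ U → Finsupp.linearCombination ℤ c f' = 0) ∧
      Finsupp.linearCombination ℤ c f ≠ 0 := by
  obtain ⟨ξ, hξ, hU⟩ := Submodule.exists_le_ker_of_notMem hf
  let L : (X →₀ ℤ) →ₗ[ℤ] ℝ := ξ.restrictScalars ℤ ∘ₗ chainVector
  have hLf : L.rangeRestrict f ≠ 0 := fun h => hξ (congrArg Subtype.val h)
  obtain ⟨μ, hμ⟩ := Module.Projective.exists_dual_ne_zero ℤ hLf
  have eval : Finsupp.linearCombination ℤ (fun x => μ (L.rangeRestrict (Finsupp.single x 1))) =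
      μ ∘ₗ L.rangeRestrict := Finsupp.lhom_ext fun x n => by
    rw [Finsupp.linearCombination_single, LinearMap.comp_apply, ← map_smul, ← map_smul,
      Finsupp.smul_single, smul_eq_mul, mul_one]
  refine ⟨fun x => μ (L.rangeRestrict (Finsupp.single x 1)), fun f' hf' => ?_, by rwa [eval]⟩
  have hLf' : L.rangeRestrict f' = 0 := Subtype.ext (hU hf')
  rw [eval, LinearMap.comp_apply, hLf', map_zero]

theorem exists_isOfFinOrder_magnusHom_and_not {α G : Type*} [Fintype α] [Group G] [Fintype G]
    (φ : FreeGroup α →* G) {r s : FreeGroup α}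
    (h : chainVector (closedChain φ r) ∉ orbitSpan translation (chainVector (closedChain φ s))) :
    ∃ c : G × α → ℤ, IsOfFinOrder (magnusHom φ c s) ∧ ¬ IsOfFinOrder (magnusHom φ c r) := by
  obtain ⟨c, hs, hr⟩ := exists_linearCombination_eq_zero_of_chainVector_notMem h
  refine ⟨c, (isOfFinOrder_magnusHom_iff φ c s).2 fun g => ?_, fun hfin => hr ?_⟩
  · have := hs ((closedChain φ s).mapDomain fun t => (g * t.1, t.2)) <| by
      rw [← translation_chainVector]
      exact Submodule.subset_span ⟨g, rfl⟩
    rwa [Finsupp.linearCombination_mapDomain] at this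
  · simpa using (isOfFinOrder_magnusHom_iff φ c r).1 hfin 1

universe u

variable {α : Type u}

theorem exists_pair_isOfFinOrder_magnusHom [Finite α] {ι : Type*} [Finite ι] [Nontrivial ι]
    {r : ι → FreeGroup α} (hroot : ∀ i, IsRoot (r i))
    (hconj : Pairwise fun i j => ¬ IsConj (r i) (r j) ∧ ¬ IsConj (r i) (r j)⁻¹) :
    ∃ (G : Type u) (_ : Group G) (_ : Finite G) (φ : FreeGroup α →* G) (c : G × α → ℤ) (i j : ι),
      IsOfFinOrder (magnusHom φ c (r j)) ∧ ¬ IsOfFinOrder (magnusHom φ c (r i)) := by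
  have := Fintype.ofFinite α
  have := Fintype.ofFinite ι
  let A : ℝ := (∑ i, (foxChain (r i)).sum fun _ n => |(n : ℝ)|) ^ 4
  obtain ⟨D, hD⟩ := exists_nat_gt (max 1 (Fintype.card ι * A))
  obtain ⟨hD₁, hDA⟩ := max_lt_iff.1 hD
  obtain ⟨G, _, _, φ, hφ⟩ := exists_separatesAxes hroot hconj D
  have := Fintype.ofFinite G
  have horth := hφ.nearlyOrthogonalOrbits (by exact_mod_cast hD₁) fun i => (hroot i).1
  obtain ⟨i, j, hij⟩ := horth.exists_notMem_orbitSpan <| by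
    have hcard : (2 : ℝ) ≤ Fintype.card ι := by exact_mod_cast Fintype.one_lt_card
    have : Fintype.card ι * (A / D) < 1 := by
      rwa [← mul_div_assoc, div_lt_one (one_pos.trans hD₁)]
    linarith
  obtain ⟨c, hc⟩ := exists_isOfFinOrder_magnusHom_and_not φ hij
  exact ⟨G, _, inferInstance, φ, c, i, j, hc⟩

theorem exists_not_isOfFinOrder_magnusHom {r : FreeGroup α} (hr : IsRoot r) :
    ∃ (G : Type u) (_ : Group G) (_ : Finite G) (φ : FreeGroup α →* G) (c : G × α → ℤ),
      ¬ IsOfFinOrder (magnusHom φ c r) := by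
  obtain ⟨G, _, _, φ, hφ⟩ := exists_separatesAxes (r := fun _ : Unit => r) (fun _ => hr)
    (fun i j hij => (hij (Subsingleton.elim i j)).elim) 2
  obtain ⟨c, hc⟩ := hφ.exists_linearCombination_closedChain_eq one_lt_two (i := ()) hr.1
  refine ⟨G, _, inferInstance, φ, c, fun hfin => (orderOf_pos (φ r)).ne' ?_⟩
  have := (isOfFinOrder_magnusHom_iff φ c r).1 hfin 1
  simp only [one_mul] at this
  exact_mod_cast hc.symm.trans this

theorem IsRoot.orderSeparable_pow_pow [Finite α] {r s : FreeGroup α} (hr : IsRoot r)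
    (hs : IsRoot s) (h : ¬ IsConj r s) (hinv : ¬ IsConj r s⁻¹) {a b : ℕ} (ha : a ≠ 0)
    (hb : b ≠ 0) : OrderSeparable (r ^ a) (s ^ b) := by
  have hinv' : ¬ IsConj s r⁻¹ := fun hconj => hinv <| by
    obtain ⟨q, hq⟩ := isConj_iff.1 hconj.symm
    exact isConj_iff.2 ⟨q, by rw [← hq]; group⟩
  have hconj : Pairwise fun i j : Bool => ¬ IsConj (if i then r else s) (if j then r else s) ∧
      ¬ IsConj (if i then r else s) (if j then r else s)⁻¹ := by
    rintro (_ | _) (_ | _) hij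
    exacts [(hij rfl).elim, ⟨mt IsConj.symm h, hinv'⟩, ⟨h, hinv⟩, (hij rfl).elim]
  obtain ⟨G, _, _, φ, c, i, j, hj, hi⟩ := exists_pair_isOfFinOrder_magnusHom
    (r := fun i : Bool => if i then r else s) (by simp [hr, hs]) hconj
  have infinite {x : Multiplicative ℤ ≀ᵣ G} (hx : ¬ IsOfFinOrder x) {k : ℕ} (hk : k ≠ 0) :
      ¬ IsOfFinOrder (x ^ k) := by simp [isOfFinOrder_pow, hx, hk]
  refine .of_map (magnusHom φ c) ?_
  rw [map_pow, map_pow]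
  match i, j with
  | true, true | false, false => exact absurd hj hi
  | true, false => exact (orderSeparable_of_isOfFinOrder hj.pow (infinite hi ha)).symm
  | false, true => exact orderSeparable_of_isOfFinOrder hj.pow (infinite hi hb)

theorem IsRoot.orderSeparable_pow {r : FreeGroup α} (hr : IsRoot r) {a b : ℕ} (ha : a ≠ 0)
    (hb : b ≠ 0) (hab : a ≠ b) : OrderSeparable (r ^ a) (r ^ b) := by
  obtain ⟨G, _, _, φ, c, hc⟩ := exists_not_isOfFinOrder_magnusHom hr
  obtain ⟨H, _, _, f, hf⟩ := exists_finite_hom_dvd_orderOf hc (mul_ne_zero ha hb)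
  exact .pow_of_dvd_orderOf (f.comp (magnusHom φ c)) hab hf

theorem orderSeparable_of_not_isConj_of_finite [Finite α] {u v : FreeGroup α} (h : ¬ IsConj u v)
    (hinv : ¬ IsConj u v⁻¹) : OrderSeparable u v := by
  rcases eq_or_ne u 1 with rfl | hu
  · exact orderSeparable_one_of_ne_one fun hv => h (hv ▸ IsConj.refl v)
  rcases eq_or_ne v 1 with rfl | hv
  · exact (orderSeparable_one_of_ne_one hu).symm
  obtain ⟨r, hr, a, rfl⟩ := exists_isRoot_pow_eq hu
  obtain ⟨s, hs, b, rfl⟩ := exists_isRoot_pow_eq hv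
  have ha : a ≠ 0 := fun ha => hu (by rw [ha, pow_zero])
  have hb : b ≠ 0 := fun hb => hv (by rw [hb, pow_zero])
  by_cases hrs : IsConj r s
  · refine (hr.orderSeparable_pow ha hb ?_).congr_right (hrs.pow b)
    rintro rfl
    exact h (hrs.pow a)
  by_cases hrs' : IsConj r s⁻¹
  · have hpow : IsConj (r ^ b) (s ^ b)⁻¹ := inv_pow s b ▸ hrs'.pow b
    refine inv_inv (s ^ b) ▸ ((hr.orderSeparable_pow ha hb ?_).congr_right hpow).inv_right
    rintro rfl
    exact hinv hpow
  exact hr.orderSeparable_pow_pow hs hrs hrs' ha hb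

theorem exists_finset_map_subtype_val_eq (u v : FreeGroup α) :
    ∃ (S : Finset α) (u' v' : FreeGroup S),
      FreeGroup.map Subtype.val u' = u ∧ FreeGroup.map Subtype.val v' = v := by
  classical
  let S : Finset α := ((u.toWord ++ v.toWord).map Prod.fst).toFinset
  have lift_word {w : FreeGroup α} (hw : w.toWord ⊆ u.toWord ++ v.toWord) :
      ∃ w' : FreeGroup S, FreeGroup.map Subtype.val w' = w := by
    have mem_S {p : α × Bool} (hp : p ∈ w.toWord) : p.1 ∈ S :=
      List.mem_toFinset.2 (List.mem_map_of_mem (hw hp))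
    obtain ⟨L, hL⟩ : w.toWord ∈ Set.range (List.map fun p : S × Bool => (p.1.1, p.2)) := by
      rw [Set.range_list_map]
      exact fun p hp => ⟨(⟨p.1, mem_S hp⟩, p.2), rfl⟩
    exact ⟨.mk L, by rw [FreeGroup.map.mk, hL, FreeGroup.mk_toWord]⟩
  obtain ⟨u', hu⟩ := lift_word (List.subset_append_left _ _)
  obtain ⟨v', hv⟩ := lift_word (List.subset_append_right _ _)
  exact ⟨S, u', v', hu, hv⟩

theorem orderSeparable_of_not_isConj {u v : FreeGroup α} (h : ¬ IsConj u v)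
    (hinv : ¬ IsConj u v⁻¹) : OrderSeparable u v := by
  classical
  obtain ⟨S, u', v', rfl, rfl⟩ := exists_finset_map_subtype_val_eq u v
  let retraction : FreeGroup α →* FreeGroup S :=
    FreeGroup.lift fun x => if hx : x ∈ S then .of ⟨x, hx⟩ else 1
  have retraction_map (w : FreeGroup S) : retraction (FreeGroup.map Subtype.val w) = w := by
    have : retraction.comp (FreeGroup.map Subtype.val) = .id _ :=
      FreeGroup.ext_hom _ _ fun x => by simp [retraction]
    exact DFunLike.congr_fun this w
  refine .of_map retraction ?_
  rw [retraction_map, retraction_map]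
  refine orderSeparable_of_not_isConj_of_finite (mt (MonoidHom.map_isConj _) h) fun hconj => hinv ?_
  rw [← map_inv]
  exact MonoidHom.map_isConj _ hconj

end OrderSeparability

theorem stmt12 {α : Type} (u v : FreeGroup α)
    (h1 : ¬ IsConj u v) (h2 : ¬ IsConj u v⁻¹) :
    ∃ (Q : Type) (_ : Group Q) (_ : Finite Q) (φ : FreeGroup α →* Q),
      Function.Surjective φ ∧ orderOf (φ u) ≠ orderOf (φ v) := by
  obtain ⟨N, hN⟩ := orderSeparable_of_not_isConj h1 h2
  exact ⟨FreeGroup α ⧸ N.toSubgroup, inferInstance, Subgroup.finite_quotient_of_finiteIndex,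
    QuotientGroup.mk' N.toSubgroup, QuotientGroup.mk'_surjective _, hN⟩
end

section
/- Let A₁ and B₁ be finite groups with a common cyclic subgroup identified via C₁ = ⟨c⟩ ≤ A₁ and D₁ = ⟨d⟩ ≤ B₁ with |c| = |d|. Then the amalgamated free product G₁ = A₁ *_{c=d} B₁ is residually finite. -/
open Monoid

def fam2 (A B : Type) : Bool → Type
  | true => A
  | false => B

instance fam2Group (A B : Type) [Group A] [Group B] : ∀ i : Bool, Group (fam2 A B i)
  | true => inferInstanceAs (Group A)
  | false => inferInstanceAs (Group B)

/-- The maps from the infinite cyclic group `FreeGroup Unit` sending the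
generator to `c` resp. `d`; since `orderOf c = orderOf d` their pushout is
the amalgamated free product `A₁ *_{c=d} B₁` over `⟨c⟩ = ⟨d⟩`. -/
def cycMaps {A B : Type} [Group A] [Group B] (c : A) (d : B) :
    ∀ i : Bool, FreeGroup Unit →* fam2 A B i
  | true => FreeGroup.lift fun _ => c
  | false => FreeGroup.lift fun _ => d

/-!
A finite subset `F` of the pushout `P` lies in a finite set `U` of translates. The images in `P` of
the base group and of the factors act freely on `P`, hence so does the base on `U` and each factor
on the part of `U` it generates from `F`. After replacing `U` by sufficiently many copies of itself,
what is left outside that part has cardinality divisible by the order of the factor, so as a set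
acted on by the base it is a disjoint union of copies of the factor; in this way the partial action
of each factor extends to the whole finite set without changing the action of the base. The extended
actions glue to a homomorphism from `P` to a finite permutation group. If `F` contains the partial
products `1, …, g` of a word for `g`, this homomorphism carries the point `1` to the point `g`.
-/

open MulAction Equiv

theorem exists_equivariant_equiv_of_stabilizer_eq {H Y : Type*} [Group H] [MulAction H Y]
    {N : Subgroup H} (hY : ∀ y : Y, stabilizer H y = N) :
    ∃ e : (Σ _ : Quotient (orbitRel H Y), H ⧸ N) ≃ Y, ∀ (h : H) s, e (h • s) = h • e s := by
  let e : Y ≃ Σ _ : Quotient (orbitRel H Y), H ⧸ N :=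
    (selfEquivSigmaOrbitsQuotientStabilizer H Y).trans
      (Equiv.sigmaCongrRight fun ω => Subgroup.quotientEquivOfEq (hY ω.out))
  have he (ω : Quotient (orbitRel H Y)) (k : H) : e.symm ⟨ω, (k : H ⧸ N)⟩ = k • ω.out := rfl
  refine ⟨e.symm, ?_⟩
  rintro h ⟨ω, k⟩
  induction k using QuotientGroup.induction_on with
  | H k => rw [Sigma.smul_mk, Quotient.smul_coe, he, he, smul_eq_mul, mul_smul]

theorem exists_equivariant_equiv_of_card_eq {H Y Z : Type*} [Group H] [MulAction H Y]
    [MulAction H Z] [Finite Y] [Finite Z] {N : Subgroup H} (hY : ∀ y : Y, stabilizer H y = N)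
    (hZ : ∀ z : Z, stabilizer H z = N) (hcard : Nat.card Y = Nat.card Z) :
    ∃ e : Y ≃ Z, ∀ (h : H) y, e (h • y) = h • e y := by
  obtain ⟨eY, heY⟩ := exists_equivariant_equiv_of_stabilizer_eq hY
  obtain ⟨eZ, heZ⟩ := exists_equivariant_equiv_of_stabilizer_eq hZ
  cases isEmpty_or_nonempty Y
  · have : IsEmpty Z := Finite.card_eq_zero_iff.mp (by rw [← hcard, Nat.card_of_isEmpty])
    exact ⟨Equiv.equivOfIsEmpty Y Z, fun _ y => isEmptyElim y⟩
  · have hΩ : Nat.card (Quotient (orbitRel H Y)) = Nat.card (Quotient (orbitRel H Z)) := by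
      have hY₀ : Nat.card Y ≠ 0 := Nat.card_ne_zero.mpr ⟨‹_›, ‹_›⟩
      rw [Nat.card_congr (eY.symm.trans (Equiv.sigmaEquivProd _ _)), Nat.card_prod] at hY₀ hcard
      rw [Nat.card_congr (eZ.symm.trans (Equiv.sigmaEquivProd _ _)), Nat.card_prod] at hcard
      exact mul_right_cancel₀ (right_ne_zero_of_mul hY₀) hcard
    obtain ⟨f⟩ := Finite.card_eq.mp hΩ
    refine ⟨eY.symm.trans ((Equiv.sigmaCongrLeft f).trans eZ), fun h y => ?_⟩
    obtain ⟨⟨ω, k⟩, rfl⟩ := eY.surjective y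
    rw [← heY]
    simp only [Equiv.trans_apply, Equiv.symm_apply_apply]
    exact heZ h ⟨f ω, k⟩

theorem exists_perm_hom_extending_smul {H K Y : Type*} [Group H] [Group K] [Finite K]
    [MulAction H Y] [Finite Y] (γ : H →* K) (hY : ∀ y : Y, stabilizer H y = γ.ker)
    (hcard : Nat.card K ∣ Nat.card Y) :
    ∃ ρ : K →* Perm Y, ∀ h y, ρ (γ h) y = h • y := by
  obtain ⟨n, hn⟩ := hcard
  let : MulAction H K := MulAction.compHom K γ
  have hsmul (h : H) (z : Σ _ : Fin n, K) : h • z = γ h • z := rfl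
  have hZ (z : Σ _ : Fin n, K) : stabilizer H z = γ.ker := by
    ext h
    obtain ⟨j, k⟩ := z
    rw [mem_stabilizer_iff, hsmul, MonoidHom.mem_ker, Sigma.smul_mk, sigma_mk_injective.eq_iff,
      smul_eq_mul, mul_eq_right]
  have hcardZ : Nat.card (Σ _ : Fin n, K) = Nat.card Y := by
    rw [Nat.card_congr (Equiv.sigmaEquivProd _ _), Nat.card_prod, Nat.card_fin, hn, mul_comm]
  obtain ⟨e, he⟩ := exists_equivariant_equiv_of_card_eq hZ hY hcardZ
  refine ⟨e.permCongrHom.toMonoidHom.comp (toPermHom K (Σ _ : Fin n, K)), fun h y => ?_⟩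
  obtain ⟨z, rfl⟩ := e.surjective y
  rw [← he, hsmul]
  exact congrArg (fun z => e (γ h • z)) (e.symm_apply_apply z)

theorem card_dvd_card_of_isCancelSMul (K X : Type*) [Group K] [MulAction K X] [IsCancelSMul K X] :
    Nat.card K ∣ Nat.card X := by
  rw [Nat.card_congr
    (selfEquivOrbitsQuotientProd (G := K) (X := X) IsCancelSMul.stabilizer_eq_bot), Nat.card_prod]
  exact Nat.dvd_mul_left ..

theorem exists_perm_hom_extending_smul_of_injective {H K X Y : Type*} [Group H] [Group K]
    [Finite K] [MulAction K X] [IsCancelSMul K X] [MulAction H Y] [Finite Y] (γ : H →* K)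
    (hY : ∀ y : Y, stabilizer H y = γ.ker) (hcard : Nat.card K ∣ Nat.card Y)
    {τ : X → Y} (hτ : Function.Injective τ) (hγτ : ∀ h x, τ (γ h • x) = h • τ x) :
    ∃ ρ : K →* Perm Y, (∀ h y, ρ (γ h) y = h • y) ∧ ∀ k x, ρ k (τ x) = τ (k • x) := by
  classical
  let R : SubMulAction H Y :=
    { carrier := Set.range τ
      smul_mem' := by rintro h _ ⟨x, rfl⟩; exact ⟨γ h • x, hγτ h x⟩ }
  let e : X ≃ R := Equiv.ofInjective τ hτ
  have hRc : Nat.card K ∣ Nat.card ↥Rᶜ := by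
    have hX := card_dvd_card_of_isCancelSMul K X
    rw [Nat.card_congr e] at hX
    have hRR : Nat.card R + Nat.card ↥Rᶜ = Nat.card Y := by
      rw [← Nat.card_sum]; exact Nat.card_congr (Equiv.Set.sumCompl (R : Set Y))
    exact (Nat.dvd_add_right hX).mp (hRR ▸ hcard)
  obtain ⟨ρ', hρ'⟩ := exists_perm_hom_extending_smul (Y := ↥Rᶜ) γ
    (fun y => (SubMulAction.stabilizer_of_subMul y).trans (hY y)) hRc
  let ρ : K →* Perm Y := (Perm.subtypeCongrHom (· ∈ R)).comp
    ((e.permCongrHom.toMonoidHom.comp (toPermHom K X)).prod ρ')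
  have hρτ (k : K) (x : X) : ρ k (τ x) = τ (k • x) := by
    have hx : τ x ∈ R := ⟨x, rfl⟩
    have hex : e.symm ⟨τ x, hx⟩ = x := e.symm_apply_apply x
    calc ρ k (τ x) = e (k • e.symm ⟨τ x, hx⟩) := Perm.subtypeCongr.left_apply _ _ hx
      _ = τ (k • x) := by rw [hex]; rfl
  refine ⟨ρ, fun h y => ?_, hρτ⟩
  by_cases hy : y ∈ R
  · obtain ⟨x, rfl⟩ := hy
    rw [hρτ, hγτ]
  · calc ρ (γ h) y = ρ' (γ h) ⟨y, hy⟩ := Perm.subtypeCongr.right_apply _ _ hy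
      _ = h • y := congrArg Subtype.val (hρ' h ⟨y, hy⟩)

theorem stabilizer_eq_ker {H K P : Type*} [Group H] [Group K] [MulAction H P] [MulAction K P]
    [IsCancelSMul K P] {γ : H →* K} (hγ : ∀ h (p : P), γ h • p = h • p) (p : P) :
    stabilizer H p = γ.ker := by
  ext h
  rw [mem_stabilizer_iff, ← hγ, ← mem_stabilizer_iff, IsCancelSMul.stabilizer_eq_bot,
    Subgroup.mem_bot, MonoidHom.mem_ker]

theorem finite_coe_subMulAction_closure {K P : Type*} [Group K] [Finite K] [MulAction K P]
    {F : Set P} (hF : F.Finite) : (SubMulAction.closure K F : Set P).Finite := by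
  let U : SubMulAction K P :=
    { carrier := ⋃ x ∈ F, orbit K x
      smul_mem' := fun k p hp => by
        obtain ⟨x, hx, hpx⟩ := Set.mem_iUnion₂.mp hp
        exact Set.mem_biUnion hx (mem_orbit_of_mem_orbit k hpx) }
  have hFU : F ⊆ U := fun x hx => Set.mem_biUnion hx (mem_orbit_self x)
  exact (hF.biUnion fun x _ => Set.finite_range _).subset (SubMulAction.closure_le.mpr hFU)

section FiniteModel

universe u v w

variable {ι : Type u} {H : Type*} {G : ι → Type v} {P : Type w} [Finite ι] [Group H]
  [∀ i, Group (G i)] [∀ i, Finite (G i)] [MulAction H P] [∀ i, MulAction (G i) P]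
  [∀ i, IsCancelSMul (G i) P] {φ : ∀ i, H →* G i}

theorem exists_finite_action_extending_subMulAction (hφ : ∀ i h (p : P), φ i h • p = h • p)
    (U : SubMulAction H P) [Finite U] (X : ∀ i, SubMulAction (G i) P)
    (hXU : ∀ i, ∀ p ∈ X i, p ∈ U) :
    ∃ (Y : Type (max u v w)) (_ : Finite Y) (σ : H →* Perm Y) (ρ : ∀ i, G i →* Perm Y)
      (τ : U → Y), (∀ i, (ρ i).comp (φ i) = σ) ∧ Function.Injective τ ∧
        ∀ i (g : G i) (x : X i), τ ⟨g • x, hXU i _ (g • x).2⟩ = ρ i g (τ ⟨x, hXU i x x.2⟩) := by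
  let Y := Σ _ : (∀ i, G i), U
  let τ (u : U) : Y := ⟨1, u⟩
  have hτ : Function.Injective τ := fun u v huv => eq_of_heq (Sigma.mk.inj huv).2
  have hstab (i : ι) (y : Y) : stabilizer H y = (φ i).ker := by
    obtain ⟨s, p⟩ := y
    rw [← stabilizer_eq_ker (hφ i) p, ← SubMulAction.stabilizer_of_subMul]
    ext h
    rw [mem_stabilizer_iff, mem_stabilizer_iff, Sigma.smul_mk, sigma_mk_injective.eq_iff]
  have hcard (i : ι) : Nat.card (G i) ∣ Nat.card Y := by
    have : Fintype ι := Fintype.ofFinite ι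
    rw [Nat.card_congr (Equiv.sigmaEquivProd _ _), Nat.card_prod, Nat.card_pi]
    exact (Finset.dvd_prod_of_mem _ (Finset.mem_univ i)).mul_right _
  have hρ (i : ι) := exists_perm_hom_extending_smul_of_injective (X := X i) (φ i) (hstab i)
    (hcard i) (τ := fun x => τ ⟨x, hXU i x x.2⟩)
    (fun x y hxy => Subtype.ext (Subtype.mk.inj (hτ hxy)))
    (fun h x => congrArg τ (Subtype.ext (hφ i h x)))
  choose ρ hρφ hρτ using hρ
  exact ⟨Y, inferInstance, toPermHom H Y, ρ, τ,
    fun i => MonoidHom.ext fun h => Equiv.ext (hρφ i h), hτ, fun i g x => (hρτ i g x).symm⟩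

theorem exists_finite_action_extending_smul_on [Nonempty ι]
    (hφ : ∀ i h (p : P), φ i h • p = h • p) {F : Set P} (hF : F.Finite) (hF₀ : F.Nonempty) :
    ∃ (Y : Type (max u v w)) (_ : Finite Y) (σ : H →* Perm Y) (ρ : ∀ i, G i →* Perm Y)
      (τ : P → Y), (∀ i, (ρ i).comp (φ i) = σ) ∧ Set.InjOn τ F ∧
        ∀ i (g : G i), ∀ x ∈ F, τ (g • x) = ρ i g (τ x) := by
  let X (i : ι) : SubMulAction (G i) P := SubMulAction.closure (G i) F
  let U : SubMulAction H P :=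
    { carrier := ⋃ i, X i
      smul_mem' := fun h p hp => by
        obtain ⟨i, hi⟩ := Set.mem_iUnion.mp hp
        exact Set.mem_iUnion.mpr ⟨i, hφ i h p ▸ (X i).smul_mem (φ i h) hi⟩ }
  have hXU (i : ι) (p : P) (hp : p ∈ X i) : p ∈ U := Set.mem_iUnion.mpr ⟨i, hp⟩
  have hFX (i : ι) : F ⊆ X i := SubMulAction.subset_closure
  have hFU : F ⊆ U := fun x hx => hXU (Classical.arbitrary ι) x (hFX _ hx)
  have : Finite U := Set.finite_iUnion fun i => finite_coe_subMulAction_closure hF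
  obtain ⟨Y, hY, σ, ρ, τ, hρφ, hτ, hρτ⟩ := exists_finite_action_extending_subMulAction hφ U X hXU
  obtain ⟨x₀, hx₀⟩ := hF₀
  let τ' : P → Y := Function.extend Subtype.val τ fun _ => τ ⟨x₀, hFU hx₀⟩
  have hτ' (u : U) : τ' u = τ u := Subtype.val_injective.extend_apply τ _ u
  refine ⟨Y, hY, σ, ρ, τ', hρφ, fun x hx y hy hxy => ?_, fun i g x hx => ?_⟩
  · exact congrArg Subtype.val <|
      hτ ((hτ' ⟨x, hFU hx⟩).symm.trans (hxy.trans (hτ' ⟨y, hFU hy⟩)))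
  · have hx' : x ∈ X i := hFX i hx
    exact (hτ' ⟨g • x, hXU i _ ((X i).smul_mem g hx')⟩).trans <|
      (hρτ i g ⟨x, hx'⟩).trans (congrArg (ρ i g) (hτ' ⟨x, hXU i x hx'⟩).symm)

end FiniteModel

section PushoutI

universe u v w t

variable {ι : Type u} {H : Type w} {G : ι → Type v} [Nonempty ι] [Group H] [∀ i, Group (G i)]
  {φ : ∀ i, H →* G i}

theorem exists_finite_forall_map_mul_eq (w x : PushoutI φ) :
    ∃ F : Set (PushoutI φ), F.Finite ∧
      ∀ {Y : Type t} (ψ : PushoutI φ →* Perm Y) (τ : PushoutI φ → Y),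
        (∀ i (g : G i), ∀ y ∈ F, τ (PushoutI.of i g * y) = ψ (PushoutI.of i g) (τ y)) →
          τ (w * x) = ψ w (τ x) := by
  induction w using PushoutI.induction_on generalizing x with
  | of i g => exact ⟨{x}, Set.finite_singleton x, fun ψ τ h => h i g x rfl⟩
  | base h =>
    rw [← PushoutI.of_apply_eq_base φ (Classical.arbitrary ι)]
    exact ⟨{x}, Set.finite_singleton x, fun ψ τ h => h _ _ x rfl⟩
  | mul w₁ w₂ ih₁ ih₂ =>
    obtain ⟨F₁, hF₁, h₁⟩ := ih₁ (w₂ * x)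
    obtain ⟨F₂, hF₂, h₂⟩ := ih₂ x
    refine ⟨F₁ ∪ F₂, hF₁.union hF₂, fun ψ τ h => ?_⟩
    rw [mul_assoc, h₁ ψ τ fun i g y hy => h i g y (.inl hy),
      h₂ ψ τ fun i g y hy => h i g y (.inr hy), map_mul, Perm.mul_apply]

theorem exists_finite_perm_hom_extending_mul_on [Finite ι] [∀ i, Finite (G i)]
    {F : Set (PushoutI φ)} (hF : F.Finite) (hF₀ : F.Nonempty) :
    ∃ (Y : Type (max u v w)) (_ : Finite Y) (ψ : PushoutI φ →* Perm Y) (τ : PushoutI φ → Y),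
      Set.InjOn τ F ∧
        ∀ i (g : G i), ∀ x ∈ F, τ (PushoutI.of i g * x) = ψ (PushoutI.of i g) (τ x) := by
  let K (i : ι) : Subgroup (PushoutI φ) := (PushoutI.of i).range
  let κ (i : ι) : H →* K i := (PushoutI.base φ).codRestrict (K i) fun h =>
    ⟨φ i h, PushoutI.of_apply_eq_base φ i h⟩
  have (i : ι) : Finite (K i) := Set.finite_range (PushoutI.of i)
  let : MulAction H (PushoutI φ) := MulAction.compHom _ (PushoutI.base φ)
  obtain ⟨Y, hY, σ, ρ, τ, hρκ, hτ, hρτ⟩ :=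
    exists_finite_action_extending_smul_on (φ := κ) (fun _ _ _ => rfl) hF hF₀
  let ψ : PushoutI φ →* Perm Y :=
    PushoutI.lift (fun i => (ρ i).comp (PushoutI.of (φ := φ) i).rangeRestrict) σ fun i => by
      rw [← hρκ i, MonoidHom.comp_assoc]
      congr 1
      ext h
      exact PushoutI.of_apply_eq_base φ i h
  refine ⟨Y, hY, ψ, τ, hτ, fun i g x hx => ?_⟩
  rw [PushoutI.lift_of]
  exact hρτ i ((PushoutI.of (φ := φ) i).rangeRestrict g) x hx

end PushoutI

theorem exists_finite_surjective_of_residuallyFinite.{u} {P : Type u} [Group P]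
    [Group.ResiduallyFinite P] {g : P} (hg : g ≠ 1) :
    ∃ (Q : Type u) (_ : Group Q) (_ : Finite Q) (φ : P →* Q), Function.Surjective φ ∧ φ g ≠ 1 := by
  obtain ⟨N, hN⟩ := Group.exists_finiteIndexNormalSubgroup_notMem g hg
  exact ⟨P ⧸ N.toSubgroup, inferInstance, inferInstance, QuotientGroup.mk' N.toSubgroup,
    QuotientGroup.mk'_surjective _, fun h => hN ((QuotientGroup.eq_one_iff g).mp h)⟩

instance finite_fam2 (A B : Type) [Finite A] [Finite B] : ∀ i : Bool, Finite (fam2 A B i)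
  | true => inferInstanceAs (Finite A)
  | false => inferInstanceAs (Finite B)

theorem stmt13_general {ι H : Type*} {G : ι → Type*} [Finite ι] [Nonempty ι] [Group H]
    [∀ i, Group (G i)] [∀ i, Finite (G i)] (φ : ∀ i, H →* G i) :
    Group.ResiduallyFinite (PushoutI φ) := by
  refine Group.residuallyFinite_of_forall_exists_finite_monoidHom fun g hg => ?_
  obtain ⟨F, hF, hFψ⟩ := exists_finite_forall_map_mul_eq g 1
  obtain ⟨Y, hY, ψ, τ, hτ, hψτ⟩ :=
    exists_finite_perm_hom_extending_mul_on (hF.union (Set.toFinite {1, g})) ⟨1, by simp⟩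
  refine ⟨Perm Y, inferInstance, inferInstance, ψ, fun hψg => hg ?_⟩
  have hg₁ : τ g = τ 1 := by
    simpa only [mul_one, hψg, Perm.one_apply] using hFψ ψ τ fun i k y hy => hψτ i k y (.inl hy)
  exact hτ (by simp) (by simp) hg₁

theorem stmt13 {A₁ B₁ : Type} [Group A₁] [Group B₁] [Finite A₁] [Finite B₁]
    (c : A₁) (d : B₁) (h : orderOf c = orderOf d) :
    ∀ g : PushoutI (cycMaps c d), g ≠ 1 →
      ∃ (Q : Type) (_ : Group Q) (_ : Finite Q) (φ : PushoutI (cycMaps c d) →* Q),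
        Function.Surjective φ ∧ φ g ≠ 1 := by
  have : Group.ResiduallyFinite (PushoutI (cycMaps c d)) := stmt13_general _
  exact fun g hg => exists_finite_surjective_of_residuallyFinite hg
end

section
/- Let G = F₁ *_{a=b} F₂ with F₁, F₂ free, a, b not proper powers, and let u ∈ F₁ \ ⟨a⟩ and v ∈ F₂ \ ⟨b⟩. If u is conjugate in G to neither v nor v⁻¹, then there exists a homomorphism of G onto a finite group under which the images of u and v have different orders. -/
open Monoid Subgroup

def fam (α β : Type) : Bool → Type
  | true => FreeGroup α
  | false => FreeGroup β

instance famGroup (α β : Type) : ∀ i : Bool, Group (fam α β i)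
  | true => inferInstanceAs (Group (FreeGroup α))
  | false => inferInstanceAs (Group (FreeGroup β))

/-- The maps from the infinite cyclic group `FreeGroup Unit` sending the
generator to `a` resp. `b`; their pushout is `F₁ *_{a=b} F₂`. -/
def amalMaps {α β : Type} (a : FreeGroup α) (b : FreeGroup β) :
    ∀ i : Bool, FreeGroup Unit →* fam α β i
  | true => FreeGroup.lift fun _ => a
  | false => FreeGroup.lift fun _ => b

/-- An element is not a proper power: `a = w ^ k` forces `|k| ≤ 1`. -/
def NotProperPower {G : Type} [Group G] (a : G) : Prop :=
  ∀ (w : G) (k : ℤ), a = w ^ k → k.natAbs ≤ 1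

/-!
Let `f` and `g` be homomorphisms of the two factors to finite groups such that `f a` and `g b` have
the same order. In the regular permutation representation `f a` and `g b` become conjugate, so after
a conjugation `f` and `g` extend to a finite quotient of the amalgam, without changing the orders of
images. It remains to choose `f` and `g` so that `f u` and `g v` have different orders.

If `u` is conjugate to `a ^ k` and `v` to `b ^ l`, then `|k| ≠ |l|`, and it suffices to prescribe
the common order of `f a` and `g b`, which may be any multiple of a suitable integer.

Otherwise let, say, no conjugate of `u` be a power of `a`, so that no conjugate of `u` commutes with
`a`. It suffices to make the order of the image of `u` arbitrarily large while that of `a` divides a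
fixed integer. Choose a finite quotient `π : F → Q` such that the images in the Cayley graph of `Q`
of the axes of `u` and `a`, and hence all their translates, are simple closed paths. Voltages `D e`
in a finite group `K` on the edges of the Cayley graph extend `π` to a homomorphism `F → K ≀ Q`, in
which powers of `a` and `u` are governed by the holonomies of these closed paths. No `a`-path is
contained in the `u`-path through `1`, since such an overlap of axes would make `a` commute with a
conjugate of `u`. Hence there are integer edge weights `c` that vanish on this `u`-path and have
nonzero sum along each `a`-path. In the affine group of the line over `ZMod p` take the voltages
`z ^ c e`, where `z` is a homothety of order `M`, and insert a translation at one edge of the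
`u`-path. If `M` is larger than all the weights of `a`-paths, then the holonomy of an `a`-path is
affine with linear part a nontrivial `M`-th root of unity, so its order divides `M`; that of the
`u`-path is a nontrivial translation, of order `p`, and `p` can be arbitrarily large.
-/

/-! ### Commuting elements of free groups -/

theorem subsingleton_of_mul_comm_freeGroup {ι : Type*}
    (h : ∀ x y : FreeGroup ι, x * y = y * x) : Subsingleton ι := by
  classical
  refine ⟨fun x y => by_contra fun hxy => ?_⟩
  let f : FreeGroup ι →* Equiv.Perm (Fin 3) :=
    FreeGroup.lift fun t => if t = x then Equiv.swap 0 1 else Equiv.swap 1 2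
  have hf := congrArg f (h (FreeGroup.of x) (FreeGroup.of y))
  simp only [f, map_mul, FreeGroup.lift_apply_of, if_true, if_neg (Ne.symm hxy)] at hf
  revert hf
  decide

theorem isCyclic_freeGroup_of_subsingleton (ι : Type*) [Subsingleton ι] :
    IsCyclic (FreeGroup ι) := by
  rcases isEmpty_or_nonempty ι with _ | ⟨⟨x⟩⟩
  · infer_instance
  · have := uniqueOfSubsingleton x
    infer_instance

theorem isCyclic_of_isFreeGroup {G : Type*} [Group G] [IsFreeGroup G] [IsMulCommutative G] :
    IsCyclic G := by
  let e := IsFreeGroup.toFreeGroup G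
  have := subsingleton_of_mul_comm_freeGroup fun x y : FreeGroup (IsFreeGroup.Generators G) =>
    e.symm.injective (by rw [map_mul, map_mul, mul_comm'])
  have := isCyclic_freeGroup_of_subsingleton (IsFreeGroup.Generators G)
  exact isCyclic_of_surjective e.symm e.symm.surjective

theorem exists_mem_zpowers_of_commute {α : Type*} {a w : FreeGroup α} (h : Commute a w) :
    ∃ z : FreeGroup α, a ∈ zpowers z ∧ w ∈ zpowers z := by
  have : IsMulCommutative (closure {a, w}) := by
    apply Subgroup.isMulCommutative_closure
    rintro x (rfl | rfl) y (rfl | rfl)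
    exacts [rfl, h, h.symm, rfl]
  have : IsCyclic (closure {a, w}) := isCyclic_of_isFreeGroup
  obtain ⟨z, hz⟩ := Subgroup.isCyclic_iff_exists_zpowers_eq_top _ |>.mp this
  exact ⟨z, hz ▸ subset_closure (by simp), hz ▸ subset_closure (by simp)⟩

theorem NotProperPower.ne_one {G : Type} [Group G] {a : G} (ha : NotProperPower a) : a ≠ 1 := by
  rintro rfl
  exact absurd (ha 1 2 (one_zpow 2).symm) (by decide)

theorem NotProperPower.mem_zpowers_of_commute {α : Type} {a w : FreeGroup α}
    (ha : NotProperPower a) (h : Commute a w) : w ∈ zpowers a := by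
  obtain ⟨z, ⟨k, rfl⟩, hw⟩ := exists_mem_zpowers_of_commute h
  have hk := ha z k rfl
  have hk0 : k ≠ 0 := fun hk0 => ha.ne_one (by simp only [hk0, zpow_zero])
  obtain rfl | rfl : k = 1 ∨ k = -1 := by omega
  · simpa using hw
  · simpa using hw

/-! ### Axes -/

theorem add_one_ediv_emod (i : ℤ) {n : ℕ} (hn : 0 < n) :
    ((i % n).toNat + 1 < n ∧ (i + 1) / n = i / n ∧ ((i + 1) % n).toNat = (i % n).toNat + 1) ∨
      ((i % n).toNat + 1 = n ∧ (i + 1) / n = i / n + 1 ∧ ((i + 1) % n).toNat = 0) := by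
  have hn' : (0 : ℤ) < n := by exact_mod_cast hn
  have h0 := Int.emod_nonneg i hn'.ne'
  have h1 := Int.emod_lt_of_pos i hn'
  have hi := Int.emod_add_mul_ediv i n
  by_cases h : i % n + 1 < n
  · left
    have : (i + 1) / n = i / n ∧ (i + 1) % n = i % n + 1 :=
      (Int.ediv_emod_unique hn').mpr ⟨by linarith, by linarith, h⟩
    omega
  · right
    have : (i + 1) / n = i / n + 1 ∧ (i + 1) % n = 0 :=
      (Int.ediv_emod_unique hn').mpr ⟨by linarith, le_rfl, hn'⟩
    omega

section Letters

variable {α : Type*}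

/-- The inverse of a letter of a word, where `(x, true)` stands for the generator `x` and
`(x, false)` for its inverse. -/
def invLetter (y : α × Bool) : α × Bool := (y.1, !y.2)

theorem invLetter_invLetter (y : α × Bool) : invLetter (invLetter y) = y := by
  simp [invLetter]

theorem mk_invLetter (y : α × Bool) : FreeGroup.mk [invLetter y] = (FreeGroup.mk [y])⁻¹ := by
  simp [invLetter, FreeGroup.inv_mk, FreeGroup.invRev]

theorem mk_singleton (x : α) (b : Bool) :
    FreeGroup.mk [(x, b)] = if b then FreeGroup.of x else (FreeGroup.of x)⁻¹ := by
  cases b <;> rfl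

theorem ne_invLetter_iff {x y : α × Bool} : y ≠ invLetter x ↔ (x.1 = y.1 → x.2 = y.2) := by
  rw [invLetter, ne_eq, Prod.ext_iff, not_and, eq_comm (a := x.1), eq_comm (a := x.2)]
  exact imp_congr_right fun _ => Bool.not_eq_not

/-- The exponent of the generator in a letter. -/
def letterSign (y : α × Bool) : ℤ := if y.2 then 1 else -1

theorem letterSign_ne_zero (y : α × Bool) : letterSign y ≠ 0 := by
  unfold letterSign; split_ifs <;> decide

theorem orderOf_zpow_letterSign {K : Type*} [Group K] (x : K) (y : α × Bool) :
    orderOf (x ^ letterSign y) = orderOf x := by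
  unfold letterSign
  split_ifs <;> simp

end Letters

/-- An axis of `w`: a bi-infinite path without backtracking in the Cayley graph of the free group,
with vertices `vertex i` and edge labels `letter i`, on which `w` acts as the translation by
`length`. The base point `vertex 0` is arbitrary, so conjugate elements have translated axes. -/
structure Axis {α : Type*} (w : FreeGroup α) where
  length : ℕ
  length_pos : 0 < length
  letter : ℤ → α × Bool
  vertex : ℤ → FreeGroup α
  vertex_succ : ∀ i, vertex (i + 1) = vertex i * FreeGroup.mk [letter i]
  vertex_add_length : ∀ i, vertex (i + length) = w * vertex i
  letter_add_length : ∀ i, letter (i + length) = letter i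
  letter_succ_ne : ∀ i, letter (i + 1) ≠ invLetter (letter i)

namespace Axis

section Construction

variable {α : Type*} {w : FreeGroup α}

/-- The translate of an axis by `g`. -/
def translate (A : Axis w) (g : FreeGroup α) : Axis (g * w * g⁻¹) where
  length := A.length
  length_pos := A.length_pos
  letter := A.letter
  vertex i := g * A.vertex i
  vertex_succ i := by rw [A.vertex_succ, mul_assoc]
  vertex_add_length i := by rw [A.vertex_add_length]; group
  letter_add_length := A.letter_add_length
  letter_succ_ne := A.letter_succ_ne

/-- The axis traversed backwards. -/
def reverse (A : Axis w) : Axis w⁻¹ where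
  length := A.length
  length_pos := A.length_pos
  letter i := invLetter (A.letter (-i - 1))
  vertex i := A.vertex (-i)
  vertex_succ i := by
    have h := A.vertex_succ (-i - 1)
    rw [sub_add_cancel] at h
    rw [mk_invLetter, h, mul_inv_cancel_right, neg_add']
  vertex_add_length i := by
    rw [eq_inv_mul_iff_mul_eq, ← A.vertex_add_length]
    congr 1
    ring
  letter_add_length i := by
    rw [← A.letter_add_length]
    congr 2
    ring
  letter_succ_ne i h := by
    rw [invLetter_invLetter] at h
    refine A.letter_succ_ne (-i - 1 - 1) ?_
    rw [sub_add_cancel, ← h]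
    congr 2
    ring

/-- The axis of a cyclically reduced word through the base point. -/
def ofIsCyclicallyReduced {L : List (α × Bool)} (hL : FreeGroup.IsCyclicallyReduced L)
    (hne : 0 < L.length) : Axis (FreeGroup.mk L) where
  length := L.length
  length_pos := hne
  letter i := L[(i % L.length).toNat]'(by
    have := Int.emod_lt_of_pos i (Int.natCast_pos.mpr hne); omega)
  vertex i := FreeGroup.mk L ^ (i / L.length) * FreeGroup.mk (L.take (i % L.length).toNat)
  vertex_succ i := by
    rw [mul_assoc, FreeGroup.mul_mk, List.take_concat_get']
    rcases add_one_ediv_emod i hne with ⟨_, hq, hr⟩ | ⟨hlast, hq, hr⟩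
    · rw [hq, hr]
    · rw [hq, hr, hlast, List.take_zero, List.take_length, ← FreeGroup.one_eq_mk, mul_one,
        zpow_add_one]
  vertex_add_length i := by
    rw [Int.add_ediv_of_dvd_right dvd_rfl, Int.ediv_self (by exact_mod_cast hne.ne'),
      Int.add_emod_right, add_comm, zpow_one_add, mul_assoc]
  letter_add_length i := by simp only [Int.add_emod_right]
  letter_succ_ne i := by
    rw [ne_invLetter_iff]
    rcases add_one_ediv_emod i hne with ⟨hlt, -, hr⟩ | ⟨hlast, -, hr⟩
    · simp only [hr]
      exact List.isChain_iff_getElem.mp hL.1 _ hlt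
    · refine hL.2 _ ?_ _ ?_
      · rw [List.getLast?_eq_getElem?, Nat.sub_eq_of_eq_add hlast.symm]
        exact List.getElem?_eq_getElem _
      · simp only [hr]
        simp [List.head?_eq_getElem?]

end Construction

end Axis

theorem nonempty_axis {α : Type*} {w : FreeGroup α} (hw : w ≠ 1) : Nonempty (Axis w) := by
  classical
  let C := FreeGroup.mk (FreeGroup.reduceCyclically.conjugator w.toWord)
  have hL := FreeGroup.reduceCyclically.isCyclicallyReduced (FreeGroup.isReduced_toWord (x := w))
  have hconj : C * FreeGroup.mk (FreeGroup.reduceCyclically w.toWord) * C⁻¹ = w := by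
    rw [FreeGroup.inv_mk, FreeGroup.mul_mk, FreeGroup.mul_mk,
      FreeGroup.reduceCyclically.conj_conjugator_reduceCyclically, FreeGroup.mk_toWord]
  have hne : FreeGroup.reduceCyclically w.toWord ≠ [] := by
    intro h
    rw [h, ← FreeGroup.one_eq_mk, mul_one, mul_inv_cancel] at hconj
    exact hw hconj.symm
  exact ⟨hconj ▸ (Axis.ofIsCyclicallyReduced hL (List.length_pos_iff.mpr hne)).translate C⟩

theorem exists_perm_apply_eq {ι X : Type*} [Finite X] {s t : ι → X}
    (h : ∀ i j, s i = s j ↔ t i = t j) : ∃ p : Equiv.Perm X, ∀ i, p (s i) = t i := by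
  classical
  have := Fintype.ofFinite X
  let f : Set.range s → X := fun x => t x.2.choose
  have f_apply (i : ι) : f ⟨s i, i, rfl⟩ = t i :=
    (h _ i).mp (Set.mem_range_self i).choose_spec
  have hf : Function.Injective f := by
    rintro ⟨_, i, rfl⟩ ⟨_, j, rfl⟩ hij
    rw [f_apply, f_apply] at hij
    exact Subtype.ext ((h i j).mpr hij)
  let e : {x // x ∈ Set.range s} ≃ {x // x ∈ Set.range f} := Equiv.ofInjective f hf
  refine ⟨e.extendSubtype, fun i => ?_⟩
  rw [e.extendSubtype_apply_of_mem _ ⟨i, rfl⟩]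
  exact f_apply i

namespace Axis

section Separation

variable {α : Type*} {w : FreeGroup α} (A : Axis w)

theorem vertex_add_mul_length (i k : ℤ) : A.vertex (i + k * A.length) = w ^ k * A.vertex i := by
  induction k with
  | zero => simp
  | succ k ih =>
    rw [add_mul, one_mul, ← add_assoc, A.vertex_add_length, ih, ← mul_assoc, ← zpow_one_add,
      add_comm]
  | pred k ih =>
    have h := A.vertex_add_length (i + (-k - 1) * A.length)
    rw [show i + (-(k : ℤ) - 1) * A.length + A.length = i + -k * A.length by ring, ih] at h
    rw [sub_eq_neg_add, zpow_add, zpow_neg_one, mul_assoc, h, inv_mul_cancel_left, sub_eq_neg_add]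

theorem letter_eq_of_dvd {i j : ℤ} (h : (A.length : ℤ) ∣ i - j) : A.letter i = A.letter j := by
  obtain ⟨k, hk⟩ := h
  have := Function.Periodic.int_mul (c := (A.length : ℤ)) A.letter_add_length k j
  rwa [Int.cast_id, show j + k * A.length = i by linarith] at this

theorem letter_ne_invLetter {i j : ℤ} (h : (A.length : ℤ) ∣ j - (i + 1)) :
    A.letter j ≠ invLetter (A.letter i) := by
  rw [A.letter_eq_of_dvd h]
  exact A.letter_succ_ne i

/-- A homomorphism separates an axis of `w` if it identifies two of its vertices only when they
differ by a multiple of the translation length. -/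
def Separates {Q : Type*} [Group Q] (π : FreeGroup α →* Q) : Prop :=
  ∀ ⦃i j : ℤ⦄, π (A.vertex i) = π (A.vertex j) → (A.length : ℤ) ∣ i - j

theorem intCast_succ_ne_of_letter {i j : ℤ} (hfst : (A.letter i).1 = (A.letter j).1)
    (hsnd : (A.letter i).2 ≠ (A.letter j).2) : ((i + 1 : ℤ) : ZMod A.length) ≠ j := fun h =>
  A.letter_ne_invLetter ((ZMod.intCast_eq_intCast_iff_dvd_sub _ _ _).mp h)
    (Prod.ext hfst.symm (Bool.eq_not.mpr hsnd.symm))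

theorem exists_perm_letter :
    ∃ p : α → Equiv.Perm (ZMod A.length), ∀ i : ℤ,
      FreeGroup.lift p (FreeGroup.mk [A.letter i]) ((i + 1 : ℤ) : ZMod A.length) = i := by
  have : NeZero A.length := ⟨A.length_pos.ne'⟩
  let source (i : ℤ) : ZMod A.length := if (A.letter i).2 then (i + 1 : ℤ) else i
  let target (i : ℤ) : ZMod A.length := if (A.letter i).2 then i else (i + 1 : ℤ)
  have hconsistent (x : α) (i j : {i : ℤ // (A.letter i).1 = x}) :
      source i = source j ↔ target i = target j := by
    obtain ⟨i, hi⟩ := i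
    obtain ⟨j, hj⟩ := j
    have hij := hi.trans hj.symm
    cases hi' : (A.letter i).2 <;> cases hj' : (A.letter j).2 <;>
      simp only [source, target, hi', hj', if_true, Bool.false_eq_true, if_false]
    · simp only [Int.cast_add, add_left_inj]
    · exact iff_of_false (A.intCast_succ_ne_of_letter hij.symm (by simp [hi', hj'])).symm
        (A.intCast_succ_ne_of_letter hij (by simp [hi', hj']))
    · exact iff_of_false (A.intCast_succ_ne_of_letter hij (by simp [hi', hj']))
        (A.intCast_succ_ne_of_letter hij.symm (by simp [hi', hj'])).symm
    · simp only [Int.cast_add, add_left_inj]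
  choose p hp using fun x => exists_perm_apply_eq (hconsistent x)
  refine ⟨p, fun i => ?_⟩
  have hpi := hp _ ⟨i, rfl⟩
  cases hi : (A.letter i).2 <;>
    simp only [source, target, hi, if_true, Bool.false_eq_true, if_false] at hpi
  · simp [FreeGroup.lift_mk, hi, ← hpi]
  · simp only [FreeGroup.lift_mk, hi, List.map_cons, List.map_nil, List.prod_singleton, cond_true,
      hpi]

theorem exists_separates :
    ∃ (Q : Type) (_ : Group Q) (_ : Finite Q) (π : FreeGroup α →* Q), A.Separates π := by
  have : NeZero A.length := ⟨A.length_pos.ne'⟩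
  obtain ⟨p, hp⟩ := A.exists_perm_letter
  have apply_succ (i : ℤ) : FreeGroup.lift p (A.vertex (i + 1)) ((i + 1 : ℤ) : ZMod A.length) =
      FreeGroup.lift p (A.vertex i) i := by
    rw [A.vertex_succ, map_mul, Equiv.Perm.mul_apply, hp]
  have apply_self (i : ℤ) : FreeGroup.lift p (A.vertex i) i = FreeGroup.lift p (A.vertex 0) 0 := by
    induction i with
    | zero => rw [Int.cast_zero]
    | succ i ih => rw [apply_succ, ih]
    | pred i ih => rw [← ih, ← sub_add_cancel (-(i : ℤ)) 1, apply_succ, sub_add_cancel]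
  refine ⟨Equiv.Perm (ZMod A.length), inferInstance, inferInstance, FreeGroup.lift p,
    fun i j hij => ?_⟩
  have : FreeGroup.lift p (A.vertex j) i = FreeGroup.lift p (A.vertex j) j := by
    rw [← hij, apply_self, hij, apply_self]
  exact (ZMod.intCast_eq_intCast_iff_dvd_sub _ _ _).mp ((Equiv.injective _ this).symm)

variable {A} {Q : Type*} [Group Q] {π : FreeGroup α →* Q}

theorem Separates.of_comp {R : Type*} [Group R] {f : Q →* R} (h : A.Separates (f.comp π)) :
    A.Separates π := fun _ _ hij => h (congrArg f hij)

end Separation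

end Axis

/-! ### Voltages on Cayley graphs -/

section Voltage

variable {α Q : Type*} [Group Q] (π : FreeGroup α →* Q)

/-- The positively oriented edge of the Cayley graph of `Q` that is traversed, forwards or
backwards, by the letter `y` read from the vertex `q`. The pair `(q, x)` stands for the edge from
`q` to `q * π (of x)`. -/
def edge (q : Q) (y : α × Bool) : Q × α :=
  (if y.2 then q else q * (π (FreeGroup.of y.1))⁻¹, y.1)

theorem edge_eq_iff {q q' : Q} {y y' : α × Bool} :
    edge π q y = edge π q' y' ↔
      q = q' ∧ y = y' ∨ q' = q * π (FreeGroup.mk [y]) ∧ y' = invLetter y := by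
  obtain ⟨x, s⟩ := y
  obtain ⟨x', s'⟩ := y'
  by_cases hx : x = x'
  · subst hx
    cases s <;> cases s' <;>
      simp [edge, invLetter, mk_singleton, eq_comm, eq_mul_inv_iff_mul_eq]
  · simp [edge, invLetter, hx, Ne.symm hx]

variable {K : Type*} [Group K] (D : Q × α → K)

/-- The extension of `π` to the wreath product that records the voltages `D e` of the edges of the
Cayley graph of `Q`. Since `q₁` in the wreath product acts on functions by `f ↦ f (q₁⁻¹ * ·)`, the
voltages of paths starting at `q` are recorded at `q⁻¹`. -/
def voltageHom : FreeGroup α →* K ≀ᵣ Q :=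
  FreeGroup.lift fun x => ⟨fun q => D (q⁻¹, x), π (FreeGroup.of x)⟩

/-- The product of the voltages along the path that starts at `q` and is labelled by `g`. -/
def pathVoltage (q : Q) (g : FreeGroup α) : K := (voltageHom π D g).left q⁻¹

theorem rightHom_voltageHom (g : FreeGroup α) :
    RegularWreathProduct.rightHom (voltageHom π D g) = π g := by
  suffices RegularWreathProduct.rightHom.comp (voltageHom π D) = π from DFunLike.congr_fun this g
  ext x
  simp [voltageHom]

theorem orderOf_dvd_orderOf_voltageHom (g : FreeGroup α) :
    orderOf (π g) ∣ orderOf (voltageHom π D g) :=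
  rightHom_voltageHom π D g ▸ orderOf_map_dvd _ _

theorem pathVoltage_mul (q : Q) (g h : FreeGroup α) :
    pathVoltage π D q (g * h) = pathVoltage π D q g * pathVoltage π D (q * π g) h := by
  simp only [pathVoltage, map_mul, RegularWreathProduct.mul_left, Pi.mul_apply, mul_inv_rev]
  rw [← rightHom_voltageHom π D g]
  rfl

theorem pathVoltage_mk_singleton (q : Q) (y : α × Bool) :
    pathVoltage π D q (FreeGroup.mk [y]) = D (edge π q y) ^ letterSign y := by
  obtain ⟨x, s⟩ := y
  cases s <;> simp [pathVoltage, voltageHom, edge, letterSign, mk_singleton]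

theorem pathVoltage_pow {q : Q} {g : FreeGroup α} (hg : π g = 1) (n : ℕ) :
    pathVoltage π D q (g ^ n) = pathVoltage π D q g ^ n := by
  induction n with
  | zero => simp [pathVoltage]
  | succ n ih => rw [pow_succ, pathVoltage_mul, ih, map_pow, hg, one_pow, mul_one, pow_succ]

theorem voltageHom_eq_one_iff {g : FreeGroup α} (hg : π g = 1) :
    voltageHom π D g = 1 ↔ ∀ q, pathVoltage π D q g = 1 := by
  have hright : (voltageHom π D g).right = 1 := (rightHom_voltageHom π D g).trans hg
  rw [RegularWreathProduct.ext_iff, hright, RegularWreathProduct.one_left, funext_iff,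
    ← (Equiv.inv Q).forall_congr_right]
  exact and_iff_left rfl

theorem voltageHom_pow_eq_one_iff {g : FreeGroup α} (hg : π g = 1) (n : ℕ) :
    voltageHom π D g ^ n = 1 ↔ ∀ q, pathVoltage π D q g ^ n = 1 := by
  rw [← map_pow, voltageHom_eq_one_iff π D (by rw [map_pow, hg, one_pow])]
  simp only [pathVoltage_pow π D hg]

end Voltage

namespace Axis

section Elevation

variable {α Q : Type*} [Group Q] {w : FreeGroup α} (A : Axis w) (π : FreeGroup α →* Q)

/-- The number of edges of the closed path in the Cayley graph of `Q` onto which `π` wraps the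
axis. -/
noncomputable def period : ℕ := A.length * orderOf (π w)

/-- The image in the Cayley graph of `Q` of the `i`-th edge of the axis, translated by `q`. -/
def imageEdge (q : Q) (i : ℤ) : Q × α := edge π (q * π (A.vertex i)) (A.letter i)

theorem period_pos [Finite Q] : 0 < A.period π := Nat.mul_pos A.length_pos (orderOf_pos _)

theorem imageEdge_emod_period (q : Q) (i : ℤ) :
    A.imageEdge π q (i % A.period π) = A.imageEdge π q i ∧
      A.letter (i % A.period π) = A.letter i := by
  have hletter : A.letter (i % A.period π) = A.letter i :=
    A.letter_eq_of_dvd ((Dvd.intro _ (Nat.cast_mul _ _).symm).trans (Int.dvd_emod_sub_self))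
  refine ⟨?_, hletter⟩
  have hvertex := A.vertex_add_mul_length (i % A.period π) (orderOf (π w) * (i / A.period π))
  have hindex : i % A.period π + orderOf (π w) * (i / A.period π) * A.length = i := by
    rw [mul_assoc, mul_comm (i / _), ← mul_assoc, ← Nat.cast_mul, mul_comm (orderOf _), ← period,
      Int.emod_add_mul_ediv]
  rw [hindex] at hvertex
  rw [imageEdge, imageEdge, hletter, hvertex, map_mul, map_zpow, zpow_mul, zpow_natCast,
    pow_orderOf_eq_one, one_zpow, one_mul]

variable {A π}

theorem Separates.period_dvd_sub_of_vertex_eq (hA : A.Separates π) {i j : ℤ}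
    (hij : π (A.vertex i) = π (A.vertex j)) : (A.period π : ℤ) ∣ i - j := by
  obtain ⟨k, hk⟩ := hA hij
  rw [show i = j + k * A.length by linarith, vertex_add_mul_length, map_mul, map_zpow,
    mul_eq_right, ← orderOf_dvd_iff_zpow_eq_one] at hij
  rw [hk, period, Nat.cast_mul]
  exact mul_dvd_mul_left _ hij

theorem Separates.period_dvd_sub_of_imageEdge_eq (hA : A.Separates π) {q : Q} {i j : ℤ}
    (hij : A.imageEdge π q i = A.imageEdge π q j) : (A.period π : ℤ) ∣ i - j := by
  rcases (edge_eq_iff π).mp hij with ⟨hvertex, -⟩ | ⟨hvertex, hletter⟩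
  · exact hA.period_dvd_sub_of_vertex_eq (mul_left_cancel hvertex)
  · rw [mul_assoc, ← map_mul, ← A.vertex_succ] at hvertex
    exact absurd hletter (A.letter_ne_invLetter (hA (mul_left_cancel hvertex)))

end Elevation

section Holonomy

variable {α Q K : Type*} [Group Q] [Group K] {w : FreeGroup α} (A : Axis w)
  (π : FreeGroup α →* Q) (D : Q × α → K)

/-- The product of the voltages along the first `n` edges of the image of the axis through `q`. -/
def partialHolonomy (q : Q) (n : ℕ) : K :=
  ((List.range n).map fun i : ℕ => D (A.imageEdge π q i) ^ letterSign (A.letter i)).prod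

theorem pathVoltage_vertex (q : Q) (n : ℕ) :
    pathVoltage π D q (A.vertex n) =
      pathVoltage π D q (A.vertex 0) * A.partialHolonomy π D q n := by
  induction n with
  | zero => simp [partialHolonomy]
  | succ n ih =>
    rw [Nat.cast_succ, A.vertex_succ, pathVoltage_mul, ih, pathVoltage_mk_singleton,
      partialHolonomy, partialHolonomy, List.range_succ, List.map_append, List.prod_append,
      List.map_singleton, List.prod_singleton, mul_assoc, imageEdge]

/-- The product of the voltages along the closed path that is the image of the axis through `q`. -/
noncomputable def holonomy (q : Q) : K := A.partialHolonomy π D q (A.period π)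

theorem pathVoltage_pow_orderOf (q : Q) :
    pathVoltage π D q (w ^ orderOf (π w)) =
      pathVoltage π D q (A.vertex 0) * A.holonomy π D q * (pathVoltage π D q (A.vertex 0))⁻¹ := by
  have hvertex : A.vertex (A.period π) = w ^ orderOf (π w) * A.vertex 0 := by
    have := A.vertex_add_mul_length 0 (orderOf (π w))
    rwa [zero_add, zpow_natCast, ← Nat.cast_mul, mul_comm] at this
  have := A.pathVoltage_vertex π D q (A.period π)
  rw [hvertex, pathVoltage_mul, map_pow, pow_orderOf_eq_one, mul_one] at this
  exact eq_mul_inv_of_mul_eq this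

theorem voltageHom_pow_eq_one_iff_holonomy (n : ℕ) :
    voltageHom π D w ^ (orderOf (π w) * n) = 1 ↔ ∀ q, A.holonomy π D q ^ n = 1 := by
  rw [pow_mul, ← map_pow,
    voltageHom_pow_eq_one_iff π D (by rw [map_pow, pow_orderOf_eq_one])]
  simp only [A.pathVoltage_pow_orderOf, conj_pow, conj_eq_one_iff]

variable {A π D} in
theorem Separates.holonomy_eq [Finite Q] (hA : A.Separates π) {q : Q}
    (hD : ∀ i, A.imageEdge π q i ≠ A.imageEdge π q 0 → D (A.imageEdge π q i) = 1) :
    A.holonomy π D q = D (A.imageEdge π q 0) ^ letterSign (A.letter 0) := by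
  obtain ⟨n, hn⟩ := Nat.exists_eq_succ_of_ne_zero (A.period_pos π).ne'
  have later_voltages : ∀ i < n, D (A.imageEdge π q (i + 1 : ℕ)) = 1 := by
    intro i hi
    refine hD _ fun h => ?_
    have := Int.le_of_dvd (by omega) (hA.period_dvd_sub_of_imageEdge_eq h)
    omega
  rw [holonomy, partialHolonomy, hn, List.range_succ_eq_map, List.map_cons, List.prod_cons,
    List.prod_eq_one, mul_one, Nat.cast_zero]
  simp only [List.map_map, List.mem_map, List.mem_range, Function.comp_apply]
  rintro _ ⟨i, hi, rfl⟩
  rw [later_voltages i hi, one_zpow]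

end Holonomy

section Chain

variable {α Q : Type*} [Group Q] {w : FreeGroup α} (A : Axis w) (π : FreeGroup α →* Q)

/-- The cellular 1-chain of the closed path that is the image of the axis through `q`. -/
noncomputable def chain (q : Q) : Q × α →₀ ℤ :=
  ∑ i ∈ Finset.range (A.period π), Finsupp.single (A.imageEdge π q i) (letterSign (A.letter i))

variable {A π} in
theorem Separates.chain_apply [Finite Q] (hA : A.Separates π) (q : Q) (i : ℤ) :
    A.chain π q (A.imageEdge π q i) = letterSign (A.letter i) := by
  have hpos : (0 : ℤ) < A.period π := by exact_mod_cast A.period_pos π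
  obtain ⟨m, hm⟩ := Int.eq_ofNat_of_zero_le (Int.emod_nonneg i hpos.ne')
  have hlt := Int.emod_lt_of_pos i hpos
  obtain ⟨hedge, hletter⟩ := A.imageEdge_emod_period π q i
  rw [← hedge, ← hletter, hm, chain, Finset.sum_apply', Finset.sum_eq_single m]
  · exact Finsupp.single_eq_same
  · intro j hj hjm
    refine Finsupp.single_eq_of_ne fun h => hjm ?_
    have := Int.eq_zero_of_abs_lt_dvd (hA.period_dvd_sub_of_imageEdge_eq h)
      (abs_lt.mpr ⟨by have := Finset.mem_range.mp hj; omega, by omega⟩)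
    omega
  · intro hm'
    rw [Finset.mem_range] at hm'
    omega

theorem map_holonomy {K L : Type*} [Group K] [Group L] {D : Q × α → K} {χ : K →* L} {z : L}
    {c : Q × α → ℤ} (h : ∀ e, χ (D e) = z ^ c e) (q : Q) :
    χ (A.holonomy π D q) = z ^ Finsupp.linearCombination ℤ c (A.chain π q) := by
  rw [holonomy, partialHolonomy, chain]
  induction A.period π with
  | zero => simp
  | succ n ih =>
    rw [List.range_succ, List.map_append, List.prod_append, map_mul, ih, Finset.sum_range_succ,
      map_add, zpow_add, List.map_singleton, List.prod_singleton, map_zpow, h,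
      Finsupp.linearCombination_single, smul_eq_mul, mul_comm (letterSign _), zpow_mul]

end Chain

end Axis

/-! ### Overlapping axes -/

namespace Axis

section Overlap

variable {α Q : Type*} [Group Q] {a w : FreeGroup α} {A : Axis w} {B : Axis a}
  {π : FreeGroup α →* Q} {p q : Q} {j : ℤ}

theorem exists_commute_conj_of_letter_eq (h : ∀ n : ℕ, B.letter n = A.letter (j + n)) :
    ∃ g, Commute a (g * w * g⁻¹) := by
  let g := B.vertex 0 * (A.vertex j)⁻¹
  have vertex_eq (n : ℕ) : B.vertex n = g * A.vertex (j + n) := by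
    induction n with
    | zero => simp [g]
    | succ n ih =>
      rw [Nat.cast_succ, B.vertex_succ, ih, h, mul_assoc, ← A.vertex_succ, add_assoc]
  have hw (n : ℕ) : g * w * g⁻¹ * B.vertex n = B.vertex (n + A.length) := by
    rw [vertex_eq, ← Nat.cast_add, vertex_eq, Nat.cast_add, ← add_assoc, A.vertex_add_length]
    group
  have ha (i : ℤ) : a * B.vertex i = B.vertex (i + B.length) := (B.vertex_add_length i).symm
  have h0 := hw 0
  rw [Nat.cast_zero, zero_add] at h0
  refine ⟨g, mul_right_cancel (b := B.vertex 0) ?_⟩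
  rw [mul_assoc, h0, ha, mul_assoc, ha, zero_add, hw, add_comm]

theorem Separates.vertex_eq_and_letter_eq (hA : A.Separates π)
    (hedges : ∀ i, B.imageEdge π q i ∈ Set.range (A.imageEdge π p))
    (hvertex : q * π (B.vertex 0) = p * π (A.vertex j)) (hletter : B.letter 0 = A.letter j)
    (n : ℕ) :
    q * π (B.vertex n) = p * π (A.vertex (j + n)) ∧ B.letter n = A.letter (j + n) := by
  induction n with
  | zero => simpa using ⟨hvertex, hletter⟩
  | succ n ih =>
    obtain ⟨ihv, ihl⟩ := ih
    have hv : q * π (B.vertex (n + 1)) = p * π (A.vertex (j + n + 1)) := by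
      rw [B.vertex_succ, A.vertex_succ, map_mul, map_mul, ← mul_assoc, ← mul_assoc, ihv, ihl]
    rw [Nat.cast_succ, ← add_assoc]
    refine ⟨hv, ?_⟩
    obtain ⟨m, hm⟩ := hedges (n + 1)
    rcases (edge_eq_iff π).mp hm with ⟨hmv, hml⟩ | ⟨hmv, hml⟩
    · rw [← hml]
      rw [hv] at hmv
      exact A.letter_eq_of_dvd (hA (mul_left_cancel hmv))
    · rw [hv, mul_assoc, ← map_mul, ← A.vertex_succ] at hmv
      have hdvd := hA (mul_left_cancel hmv)
      rw [add_sub_add_right_eq_sub] at hdvd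
      rw [A.letter_eq_of_dvd hdvd] at ihl
      exact absurd (hml.trans (congrArg _ ihl.symm)) (B.letter_succ_ne n)

theorem reverse_imageEdge (i : ℤ) : A.reverse.imageEdge π q (-i - 1) = A.imageEdge π q i := by
  have hvertex := A.vertex_succ i
  rw [imageEdge, imageEdge, eq_comm, edge_eq_iff]
  right
  simp only [reverse, neg_sub, sub_neg_eq_add, add_comm (1 : ℤ), add_sub_cancel_right, and_true]
  rw [hvertex, map_mul, mul_assoc]

theorem Separates.reverse (hA : A.Separates π) : A.reverse.Separates π := by
  intro i j hij
  have := hA hij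
  rwa [neg_sub_neg, ← dvd_neg, neg_sub] at this

theorem Separates.exists_commute_conj (hA : A.Separates π)
    (hedges : ∀ i, B.imageEdge π q i ∈ Set.range (A.imageEdge π p)) :
    ∃ g, Commute a (g * w * g⁻¹) := by
  obtain ⟨j, hj⟩ := hedges 0
  rcases (edge_eq_iff π).mp hj with ⟨hvertex, hletter⟩ | ⟨hvertex, hletter⟩
  · exact exists_commute_conj_of_letter_eq fun n =>
      (hA.vertex_eq_and_letter_eq hedges hvertex.symm hletter.symm n).2
  · have hedges' (i : ℤ) : B.imageEdge π q i ∈ Set.range (A.reverse.imageEdge π p) := by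
      obtain ⟨k, hk⟩ := hedges i
      exact ⟨-k - 1, (reverse_imageEdge k).trans hk⟩
    have hvertex' : q * π (B.vertex 0) = p * π (A.reverse.vertex (-j - 1)) := by
      simp only [Axis.reverse, neg_sub, sub_neg_eq_add, add_comm (1 : ℤ)]
      rw [hvertex, A.vertex_succ, map_mul, mul_assoc]
    have hletter' : B.letter 0 = A.reverse.letter (-j - 1) := by
      simp only [Axis.reverse, neg_sub, sub_neg_eq_add, add_comm (1 : ℤ), add_sub_cancel_right]
      exact hletter
    obtain ⟨g, hg⟩ := exists_commute_conj_of_letter_eq fun n =>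
      (hA.reverse.vertex_eq_and_letter_eq hedges' hvertex' hletter' n).2
    exact ⟨g, by rwa [← conj_inv, Commute.inv_right_iff] at hg⟩

end Overlap

end Axis

/-! ### Orders of images in finite groups -/

theorem exists_integer_weights {ι E : Type*} [Finite ι] (v : ι → E →₀ ℤ) (hv : ∀ i, v i ≠ 0) :
    ∃ c : E → ℤ, ∀ i, Finsupp.linearCombination ℤ c (v i) ≠ 0 := by
  have := Fintype.ofFinite ι
  let form (i : ι) : MvPolynomial E ℤ := Finsupp.linearCombination ℤ MvPolynomial.X (v i)
  have eval_form (c : E → ℤ) (i : ι) :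
      MvPolynomial.eval c (form i) = Finsupp.linearCombination ℤ c (v i) := by
    simp [form, Finsupp.linearCombination_apply, Finsupp.sum, map_sum]
  have form_ne_zero (i : ι) : form i ≠ 0 := by
    obtain ⟨e, he⟩ := Finsupp.ne_iff.mp (hv i)
    classical
    refine fun h => he ?_
    have := eval_form (Pi.single e 1) i
    rw [h] at this
    simpa [Finsupp.linearCombination_apply, Finsupp.sum, Pi.single_apply] using this.symm
  obtain ⟨c, hc⟩ : ∃ c, MvPolynomial.eval c (∏ i, form i) ≠ 0 := by
    by_contra! h
    exact Finset.prod_ne_zero_iff.mpr (fun i _ => form_ne_zero i)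
      (MvPolynomial.funext fun c => by rw [h c, map_zero])
  rw [map_prod, Finset.prod_ne_zero_iff] at hc
  exact ⟨c, fun i => eval_form c i ▸ hc i (Finset.mem_univ i)⟩

section AffineLine

variable {k : Type*} [Field k]

/-- The linear coefficient `c` of an affine bijection `x ↦ c * x + d` of the line over `k`. -/
noncomputable def affineCoeff : (k ≃ᵃ[k] k) →* kˣ := LinearEquiv.det.comp AffineEquiv.linearHom

theorem affineEquiv_apply_eq (g : k ≃ᵃ[k] k) (x y : k) :
    g x = affineCoeff g * (x - y) + g y := by
  have hlinear : g.linear (x - y) = affineCoeff g * (x - y) := by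
    rw [affineCoeff, MonoidHom.comp_apply, LinearEquiv.coe_det, LinearMap.det_ring, mul_comm,
      ← smul_eq_mul, ← map_smul, smul_eq_mul, mul_one]
    rfl
  rw [← hlinear, ← vadd_eq_add, ← AffineEquiv.map_vadd, vadd_eq_add, sub_add_cancel]

theorem coe_affineCoeff (g : k ≃ᵃ[k] k) : (affineCoeff g : k) = g 1 - g 0 := by
  rw [affineEquiv_apply_eq g 1 0, sub_zero, mul_one, add_sub_cancel_right]

theorem affineCoeff_constVAddHom (v : Multiplicative k) :
    affineCoeff (AffineEquiv.constVAddHom k k v) = 1 :=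
  Units.ext <| by simp [coe_affineCoeff]

theorem affineCoeff_homothetyUnitsMulHom (c : kˣ) :
    affineCoeff (AffineEquiv.homothetyUnitsMulHom (0 : k) c) = c :=
  Units.ext <| by simp [coe_affineCoeff, AffineMap.homothety_apply]

theorem constVAddHom_injective : Function.Injective (AffineEquiv.constVAddHom k k) := by
  intro v w h
  simpa using DFunLike.congr_fun h 0

theorem exists_affineEquiv_apply_eq_self {g : k ≃ᵃ[k] k} (hg : affineCoeff g ≠ 1) :
    ∃ x, g x = x := by
  have hne : (1 : k) - affineCoeff g ≠ 0 := sub_ne_zero.mpr fun h => hg (Units.ext h.symm)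
  refine ⟨g 0 / (1 - affineCoeff g), ?_⟩
  rw [affineEquiv_apply_eq g _ 0]
  field_simp
  ring

theorem affineEquiv_pow_eq_one {g : k ≃ᵃ[k] k} {n : ℕ} (hg : affineCoeff g ≠ 1)
    (hn : affineCoeff g ^ n = 1) : g ^ n = 1 := by
  obtain ⟨x, hx⟩ := exists_affineEquiv_apply_eq_self hg
  have hfix : (g ^ n) x = x := by
    clear hn
    induction n with
    | zero => rfl
    | succ n ih => rw [pow_succ, AffineEquiv.coe_mul, Function.comp_apply, hx, ih]
  ext y
  rw [affineEquiv_apply_eq _ y x, hfix, map_pow, hn]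
  simp

end AffineLine

theorem exists_unit_orderOf_eq {p M : ℕ} [Fact p.Prime] (h : M ∣ p - 1) :
    ∃ ζ : (ZMod p)ˣ, orderOf ζ = M := by
  obtain ⟨ζ, hζ⟩ := IsCyclic.exists_ofOrder_eq_natCard (α := (ZMod p)ˣ)
  rw [Nat.card_eq_fintype_card, ZMod.card_units] at hζ
  rw [← hζ] at h
  exact ⟨_, orderOf_pow_orderOf_div (orderOf_pos ζ).ne' h⟩

theorem exists_finite_group_pow_eq_one_of_character_ne_one {M : ℕ} (hM : M ≠ 0) (N : ℕ) :
    ∃ (K : Type) (_ : Group K) (_ : Finite K) (L : Type) (_ : Group L) (χ : K →* L) (z τ : K),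
      orderOf (χ z) = M ∧ χ τ = 1 ∧ N < orderOf τ ∧
        ∀ x, χ x ≠ 1 → χ x ^ M = 1 → x ^ M = 1 := by
  obtain ⟨p, hp, hN, hpM⟩ := Nat.exists_prime_gt_modEq_one N hM
  have := Fact.mk hp
  obtain ⟨ζ, hζ⟩ := exists_unit_orderOf_eq ((Nat.modEq_iff_dvd' hp.one_le).mp hpM.symm)
  refine ⟨ZMod p ≃ᵃ[ZMod p] ZMod p, inferInstance, DFunLike.finite _, (ZMod p)ˣ, inferInstance,
    affineCoeff, AffineEquiv.homothetyUnitsMulHom 0 ζ,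
    AffineEquiv.constVAddHom _ _ (Multiplicative.ofAdd 1), ?_, affineCoeff_constVAddHom _, ?_,
    fun x => affineEquiv_pow_eq_one⟩
  · rw [affineCoeff_homothetyUnitsMulHom, hζ]
  · rwa [orderOf_injective _ constVAddHom_injective, orderOf_ofAdd_eq_addOrderOf,
      ZMod.addOrderOf_one]

section Orders

variable {α : Type*} {a w : FreeGroup α}

theorem exists_finite_hom_orderOf_eq (ha : a ≠ 1) :
    ∃ M : ℕ, 0 < M ∧ ∀ n, 0 < n → M ∣ n →
      ∃ (Q : Type) (_ : Group Q) (_ : Finite Q) (φ : FreeGroup α →* Q), orderOf (φ a) = n := by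
  classical
  obtain ⟨A⟩ := nonempty_axis ha
  obtain ⟨Q, _, _, π, hA⟩ := A.exists_separates
  refine ⟨orderOf (π a), orderOf_pos _, ?_⟩
  rintro _ hn ⟨N, rfl⟩
  have : NeZero N := ⟨(Nat.pos_of_mul_pos_left hn).ne'⟩
  let K := Multiplicative (ZMod N)
  let D (e : Q × α) : K := if e = A.imageEdge π 1 0 then Multiplicative.ofAdd 1 else 1
  have pow_card (x : K) : x ^ N = 1 := by
    simpa [K, Nat.card_zmod] using pow_card_eq_one' (x := x)
  have orderOf_holonomy : orderOf (A.holonomy π D 1) = N := by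
    rw [hA.holonomy_eq fun i hi => if_neg hi, orderOf_zpow_letterSign]
    simp only [D, if_true, K, orderOf_ofAdd_eq_addOrderOf, ZMod.addOrderOf_one]
  refine ⟨K ≀ᵣ Q, inferInstance, inferInstance, voltageHom π D, Nat.dvd_antisymm ?_ ?_⟩
  · rw [orderOf_dvd_iff_pow_eq_one, A.voltageHom_pow_eq_one_iff_holonomy]
    exact fun q => pow_card _
  · obtain ⟨k, hk⟩ := orderOf_dvd_orderOf_voltageHom π D a
    have hpow := pow_orderOf_eq_one (voltageHom π D a)
    rw [hk, A.voltageHom_pow_eq_one_iff_holonomy] at hpow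
    rw [hk]
    exact mul_dvd_mul_left _ (orderOf_holonomy ▸ orderOf_dvd_of_pow_eq_one (hpow 1))

theorem exists_finite_hom_separates (A : Axis w) (B : Axis a) :
    ∃ (Q : Type) (_ : Group Q) (_ : Finite Q) (π : FreeGroup α →* Q),
      A.Separates π ∧ B.Separates π := by
  obtain ⟨Q₁, _, _, π₁, h₁⟩ := A.exists_separates
  obtain ⟨Q₂, _, _, π₂, h₂⟩ := B.exists_separates
  exact ⟨Q₁ × Q₂, inferInstance, inferInstance, π₁.prod π₂,
    .of_comp (f := MonoidHom.fst Q₁ Q₂) h₁, .of_comp (f := MonoidHom.snd Q₁ Q₂) h₂⟩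

theorem exists_weights_vanishing_on {ι E : Type*} [Finite ι] (v : ι → E →₀ ℤ) {S : Set E}
    (hv : ∀ i, ∃ e ∉ S, v i e ≠ 0) :
    ∃ c : E → ℤ, (∀ e ∈ S, c e = 0) ∧ ∀ i, Finsupp.linearCombination ℤ c (v i) ≠ 0 := by
  classical
  have filter_ne_zero (i : ι) : (v i).filter (· ∉ S) ≠ 0 := by
    obtain ⟨e, he, hne⟩ := hv i
    exact fun h => hne (by rw [← Finsupp.filter_apply_pos (· ∉ S) (v i) he, h, Finsupp.zero_apply])
  obtain ⟨c, hc⟩ := exists_integer_weights _ filter_ne_zero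
  refine ⟨fun e => if e ∈ S then 0 else c e, fun e he => if_pos he, fun i => ?_⟩
  convert hc i using 1
  simp only [Finsupp.linearCombination_apply, smul_ite, smul_zero]
  rw [Finsupp.sum_filter_index]
  simp only [Finsupp.sum, Finsupp.support_filter, Finset.sum_filter, ite_not]

theorem Axis.Separates.exists_weights {Q : Type*} [Group Q] [Finite Q] {π : FreeGroup α →* Q}
    {A : Axis w} {B : Axis a} (hA : A.Separates π) (hB : B.Separates π)
    (h : ∀ g, ¬ Commute a (g * w * g⁻¹)) (p : Q) :
    ∃ c : Q × α → ℤ, (∀ i, c (A.imageEdge π p i) = 0) ∧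
      ∀ q, Finsupp.linearCombination ℤ c (B.chain π q) ≠ 0 := by
  obtain ⟨c, hc, hlin⟩ := exists_weights_vanishing_on (B.chain π) (S := Set.range (A.imageEdge π p))
    fun q => by
      by_contra! hq
      obtain ⟨g, hg⟩ := hA.exists_commute_conj fun i => by
        by_contra hi
        exact letterSign_ne_zero _ ((hB.chain_apply q i).symm.trans (hq _ hi))
      exact h g hg
  exact ⟨c, fun i => hc _ ⟨i, rfl⟩, hlin⟩

theorem Axis.Separates.exists_voltages {Q : Type*} [Group Q] [Finite Q] {π : FreeGroup α →* Q}
    {A : Axis w} {B : Axis a} (hA : A.Separates π) {p : Q} {c : Q × α → ℤ}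
    (hcA : ∀ i, c (A.imageEdge π p i) = 0)
    (hcB : ∀ q, Finsupp.linearCombination ℤ c (B.chain π q) ≠ 0) :
    ∃ M : ℕ, 0 < M ∧ ∀ N, ∃ (K : Type) (_ : Group K) (_ : Finite K) (D : Q × α → K),
      (∀ q, B.holonomy π D q ^ M = 1) ∧ N < orderOf (A.holonomy π D p) := by
  classical
  obtain ⟨C, hC⟩ := Finite.exists_le fun q => (Finsupp.linearCombination ℤ c (B.chain π q)).natAbs
  refine ⟨C + 1, C.succ_pos, fun N => ?_⟩
  obtain ⟨K, _, _, L, _, χ, z, τ, hz, hτ, hNτ, hK⟩ :=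
    exists_finite_group_pow_eq_one_of_character_ne_one C.succ_ne_zero N
  let D (e : Q × α) : K := z ^ c e * if e = A.imageEdge π p 0 then τ else 1
  have map_D (e : Q × α) : χ (D e) = χ z ^ c e := by
    simp only [D, map_mul, map_zpow, apply_ite χ, hτ, map_one, ite_self, mul_one]
  have D_eq (i : ℤ) : D (A.imageEdge π p i) =
      if A.imageEdge π p i = A.imageEdge π p 0 then τ else 1 := by
    simp only [D, hcA, zpow_zero, one_mul]
  refine ⟨K, inferInstance, inferInstance, D, fun q => ?_, ?_⟩
  · apply hK <;> rw [B.map_holonomy π map_D]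
    · rw [ne_eq, ← orderOf_dvd_iff_zpow_eq_one, hz]
      intro hdvd
      have := Nat.le_of_dvd (Int.natAbs_pos.mpr (hcB q)) (Int.natCast_dvd.mp hdvd)
      have := hC q
      omega
    · rw [← zpow_natCast, zpow_comm, zpow_natCast, ← hz, pow_orderOf_eq_one, one_zpow]
  · rwa [hA.holonomy_eq fun i hi => by rw [D_eq, if_neg hi], orderOf_zpow_letterSign, D_eq,
      if_pos rfl]

theorem exists_finite_hom_pow_eq_one_and_pow_ne_one (hw : w ≠ 1) (ha : a ≠ 1)
    (h : ∀ g, ¬ Commute a (g * w * g⁻¹)) :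
    ∃ m : ℕ, 0 < m ∧ ∀ N, 0 < N →
      ∃ (Q : Type) (_ : Group Q) (_ : Finite Q) (φ : FreeGroup α →* Q),
        φ a ^ m = 1 ∧ φ w ^ N ≠ 1 := by
  obtain ⟨A⟩ := nonempty_axis hw
  obtain ⟨B⟩ := nonempty_axis ha
  obtain ⟨Q, _, _, π, hA, hB⟩ := exists_finite_hom_separates A B
  obtain ⟨c, hcA, hcB⟩ := hA.exists_weights hB h 1
  obtain ⟨M, hM, hvoltages⟩ := hA.exists_voltages hcA hcB
  refine ⟨orderOf (π a) * M, Nat.mul_pos (orderOf_pos _) hM, fun N hN => ?_⟩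
  obtain ⟨K, _, _, D, hpow, horder⟩ := hvoltages N
  refine ⟨K ≀ᵣ Q, inferInstance, inferInstance, voltageHom π D,
    (B.voltageHom_pow_eq_one_iff_holonomy π D _).mpr hpow, fun h_one => ?_⟩
  have h_one' : voltageHom π D w ^ (orderOf (π w) * N) = 1 := by
    rw [mul_comm, pow_mul, h_one, one_pow]
  have := (A.voltageHom_pow_eq_one_iff_holonomy π D N).mp h_one' 1
  exact horder.not_ge (Nat.le_of_dvd hN (orderOf_dvd_of_pow_eq_one this))

end Orders

section Factors

variable {α : Type} {a u : FreeGroup α}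

theorem NotProperPower.not_commute_conj (ha : NotProperPower a) (h : ∀ k : ℤ, ¬ IsConj (a ^ k) u)
    (g : FreeGroup α) : ¬ Commute a (g * u * g⁻¹) := fun hg => by
  obtain ⟨k, hk⟩ := ha.mem_zpowers_of_commute hg
  exact h k (isConj_iff.mpr ⟨g, hk.symm⟩).symm

theorem NotProperPower.exists_finite_hom_orderOf_ne (ha : NotProperPower a)
    (h : ∀ k : ℤ, ¬ IsConj (a ^ k) u) :
    ∃ M : ℕ, 0 < M ∧ ∀ n, 0 < n → M ∣ n → ∀ t,
      ∃ (Q : Type) (_ : Group Q) (_ : Finite Q) (φ : FreeGroup α →* Q),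
        orderOf (φ a) = n ∧ orderOf (φ u) ≠ t := by
  have hu : u ≠ 1 := by
    rintro rfl
    exact h 0 (by rw [zpow_zero])
  obtain ⟨R, hR, hpotent⟩ := exists_finite_hom_orderOf_eq ha.ne_one
  obtain ⟨m, hm, hunbounded⟩ :=
    exists_finite_hom_pow_eq_one_and_pow_ne_one hu ha.ne_one (ha.not_commute_conj h)
  refine ⟨R * m, Nat.mul_pos hR hm, fun n hn hdvd t => ?_⟩
  obtain ⟨P, _, _, φ, hφ⟩ := hpotent n hn (dvd_of_mul_right_dvd hdvd)
  obtain rfl | ht := Nat.eq_zero_or_pos t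
  · exact ⟨P, inferInstance, inferInstance, φ, hφ, (orderOf_pos _).ne'⟩
  obtain ⟨Q, _, _, ψ, hψa, hψu⟩ := hunbounded t ht
  refine ⟨P × Q, inferInstance, inferInstance, φ.prod ψ, ?_, fun horder => hψu ?_⟩
  · rw [MonoidHom.prod_apply, Prod.orderOf_mk, hφ]
    exact Nat.lcm_eq_left
      ((orderOf_dvd_of_pow_eq_one hψa).trans (dvd_of_mul_left_dvd hdvd))
  · rw [← orderOf_dvd_iff_pow_eq_one, ← horder, MonoidHom.prod_apply]
    exact orderOf_snd_dvd_orderOf (x := (φ u, ψ u))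

end Factors

theorem orderOf_zpow {G : Type*} [Group G] [Finite G] (x : G) (k : ℤ) :
    orderOf (x ^ k) = orderOf x / (orderOf x).gcd k.natAbs := by
  obtain hk | hk := Int.natAbs_eq k
  · rw [hk, zpow_natCast, orderOf_pow, Int.natAbs_natCast]
  · rw [hk, zpow_neg, orderOf_inv, zpow_natCast, orderOf_pow, Int.natAbs_neg, Int.natAbs_natCast]

theorem orderOf_eq_of_isConj {G : Type*} [Group G] {x y : G} (h : IsConj x y) :
    orderOf x = orderOf y := by
  obtain ⟨c, hc⟩ := h
  exact hc.orderOf_eq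

theorem gcd_ne_gcd_of_lt {n k l : ℕ} (hn : 0 < n) (hdvd : 2 * l ∣ n) (h : k < l) :
    n.gcd k ≠ n.gcd l := by
  rw [Nat.gcd_eq_right (dvd_of_mul_left_dvd hdvd)]
  obtain rfl | hk := Nat.eq_zero_or_pos k
  · have := Nat.le_of_dvd hn hdvd
    rw [Nat.gcd_zero_right]
    omega
  · exact ((Nat.gcd_le_right n hk).trans_lt h).ne

theorem orderOf_zpow_ne_of_natAbs_lt {G H : Type*} [Group G] [Group H] [Finite G] [Finite H]
    {x : G} {y : H} {k l : ℤ} (hxy : orderOf x = orderOf y) (hdvd : 2 * l.natAbs ∣ orderOf x)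
    (h : k.natAbs < l.natAbs) : orderOf (x ^ k) ≠ orderOf (y ^ l) := by
  rw [orderOf_zpow, orderOf_zpow, ← hxy, ne_eq,
    Nat.div_eq_iff_eq_of_dvd_dvd (orderOf_pos x).ne' (Nat.gcd_dvd_left _ _) (Nat.gcd_dvd_left _ _)]
  exact gcd_ne_gcd_of_lt (orderOf_pos x) hdvd h

/-! ### Finite quotients of the amalgam -/

section RegularRepresentation

open Equiv

variable {H : Type*} [Group H] [Fintype H] [DecidableEq H]

theorem orderOf_cycleOf_toPermHom {x : H} (hx : x ≠ 1) (y : H) :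
    orderOf ((MulAction.toPermHom H H x).cycleOf y) = orderOf x := by
  have pow_apply (n : ℕ) : (MulAction.toPermHom H H x ^ n) y = x ^ n * y := by
    rw [← map_pow]; rfl
  have hmoves : MulAction.toPermHom H H x y ≠ y := fun h => hx (mul_eq_right.mp h)
  rw [orderOf_eq_orderOf_iff]
  intro n
  rw [(Perm.isCycle_cycleOf _ hmoves).pow_eq_one_iff' (by rwa [Perm.cycleOf_apply_self]),
    Perm.cycleOf_pow_apply_self, pow_apply, mul_eq_right]

theorem cycleType_toPermHom {x : H} (hx : x ≠ 1) :
    (MulAction.toPermHom H H x).cycleType =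
      Multiset.replicate (Fintype.card H / orderOf x) (orderOf x) := by
  set σ := MulAction.toPermHom H H x
  have length_eq : ∀ n ∈ σ.cycleType, n = orderOf x := by
    intro n hn
    rw [Perm.cycleType_def, Multiset.mem_map] at hn
    obtain ⟨c, hc, rfl⟩ := hn
    obtain ⟨hcycle, -⟩ := Perm.mem_cycleFactorsFinset_iff.mp hc
    obtain ⟨y, hy⟩ := hcycle.nonempty_support
    rw [Function.comp_apply, ← hcycle.orderOf, Perm.cycle_is_cycleOf hy hc,
      orderOf_cycleOf_toPermHom hx]
  have support_eq : σ.support = Finset.univ := by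
    ext y
    exact ⟨fun _ => Finset.mem_univ y,
      fun _ => Perm.mem_support.mpr fun h => hx (mul_eq_right.mp h)⟩
  have hcount : Fintype.card H = σ.cycleType.card * orderOf x := by
    rw [← Finset.card_univ, ← support_eq, ← σ.sum_cycleType,
      Multiset.eq_replicate_card.mpr length_eq, Multiset.sum_replicate, Multiset.card_replicate,
      smul_eq_mul]
  rw [hcount, Nat.mul_div_cancel _ (orderOf_pos x), ← Multiset.eq_replicate_card.mpr length_eq]

end RegularRepresentation

theorem isConj_toPermHom {H : Type*} [Group H] [Finite H] {x y : H} (h : orderOf x = orderOf y) :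
    IsConj (MulAction.toPermHom H H x) (MulAction.toPermHom H H y) := by
  classical
  have := Fintype.ofFinite H
  by_cases hx : x = 1
  · rw [hx, orderOf_one, eq_comm, orderOf_eq_one_iff] at h
    rw [hx, h]
  · have hy : y ≠ 1 := by rwa [ne_eq, ← orderOf_eq_one_iff, ← h, orderOf_eq_one_iff]
    refine Equiv.Perm.isConj_of_cycleType_eq ?_
    rw [cycleType_toPermHom hx, cycleType_toPermHom hy, h]

theorem exists_finite_amalgam {A B : Type*} [Group A] [Group B] [Finite A] [Finite B]
    {x : A} {y : B} (h : orderOf x = orderOf y) :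
    ∃ i : A →* Equiv.Perm (A × B), ∃ j : B →* Equiv.Perm (A × B),
      Function.Injective i ∧ Function.Injective j ∧ i x = j y := by
  let ρ := MulAction.toPermHom (A × B) (A × B)
  have hρ : Function.Injective ρ := MulAction.toPerm_injective
  have hxy : orderOf (MonoidHom.inl A B x) = orderOf (MonoidHom.inr A B y) := by
    simpa [Prod.orderOf_mk] using h
  obtain ⟨c, hc⟩ := isConj_iff.mp (isConj_toPermHom hxy)
  exact ⟨(MulAut.conj c).toMonoidHom.comp (ρ.comp (MonoidHom.inl A B)),
    ρ.comp (MonoidHom.inr A B),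
    (MulAut.conj c).injective.comp (hρ.comp (Prod.mk_left_injective 1)),
    hρ.comp (Prod.mk_right_injective 1), hc⟩

section Amalgam

variable {α β : Type} (a : FreeGroup α) (b : FreeGroup β)

theorem of_amalgamated_eq :
    PushoutI.of (φ := amalMaps a b) true a = PushoutI.of (φ := amalMaps a b) false b := by
  have htrue := PushoutI.of_apply_eq_base (amalMaps a b) true (FreeGroup.of ())
  have hfalse := PushoutI.of_apply_eq_base (amalMaps a b) false (FreeGroup.of ())
  rw [show amalMaps a b true (FreeGroup.of ()) = a from FreeGroup.lift_apply_of] at htrue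
  rw [show amalMaps a b false (FreeGroup.of ()) = b from FreeGroup.lift_apply_of] at hfalse
  rw [htrue, hfalse]

variable {a b}

theorem exists_hom_amalgam {P : Type*} [Group P] (f : FreeGroup α →* P) (g : FreeGroup β →* P)
    (h : f a = g b) :
    ∃ Φ : PushoutI (amalMaps a b) →* P,
      (∀ x : FreeGroup α, Φ (PushoutI.of (φ := amalMaps a b) true x) = f x) ∧
      ∀ y : FreeGroup β, Φ (PushoutI.of (φ := amalMaps a b) false y) = g y := by
  let maps : ∀ i, fam α β i →* P
    | true => f
    | false => g
  have hmaps : ∀ i, (maps i).comp (amalMaps a b i) = FreeGroup.lift fun _ => f a := by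
    rintro (_ | _) <;> apply FreeGroup.ext_hom <;> intro
    · change g (FreeGroup.lift (fun _ => b) (FreeGroup.of _)) = _
      rw [FreeGroup.lift_apply_of, FreeGroup.lift_apply_of, h]
    · change f (FreeGroup.lift (fun _ => a) (FreeGroup.of _)) = _
      rw [FreeGroup.lift_apply_of, FreeGroup.lift_apply_of]
  exact ⟨PushoutI.lift maps _ hmaps, fun x => PushoutI.lift_of (i := true) maps _ hmaps x,
    fun y => PushoutI.lift_of (i := false) maps _ hmaps y⟩

theorem exists_finite_quotient_amalgam {A B : Type} [Group A] [Group B] [Finite A] [Finite B]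
    (f : FreeGroup α →* A) (g : FreeGroup β →* B) (h : orderOf (f a) = orderOf (g b)) :
    ∃ (Q : Type) (_ : Group Q) (_ : Finite Q) (φ : PushoutI (amalMaps a b) →* Q),
      Function.Surjective φ ∧
      (∀ x : FreeGroup α,
        orderOf (φ (PushoutI.of (φ := amalMaps a b) true x)) = orderOf (f x)) ∧
      ∀ y : FreeGroup β,
        orderOf (φ (PushoutI.of (φ := amalMaps a b) false y)) = orderOf (g y) := by
  obtain ⟨i, j, hi, hj, hij⟩ := exists_finite_amalgam h
  obtain ⟨Φ, hΦf, hΦg⟩ := exists_hom_amalgam (i.comp f) (j.comp g) hij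
  refine ⟨Φ.range, inferInstance, inferInstance, Φ.rangeRestrict, Φ.rangeRestrict_surjective,
    fun x => ?_, fun y => ?_⟩
  · rw [← Subgroup.orderOf_coe, MonoidHom.coe_rangeRestrict, hΦf]
    exact orderOf_injective i hi _
  · rw [← Subgroup.orderOf_coe, MonoidHom.coe_rangeRestrict, hΦg]
    exact orderOf_injective j hj _

end Amalgam

section Separation

variable {α β : Type} {a u : FreeGroup α} {b v : FreeGroup β}

/-- The elements `u` and `v` have images of different orders under some homomorphisms of the two
free groups to finite groups that map `a` and `b` to elements of the same order. Such homomorphisms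
extend to a finite quotient of the free product amalgamated along `a = b`. -/
def OrderSeparated (a u : FreeGroup α) (b v : FreeGroup β) : Prop :=
  ∃ (A : Type) (_ : Group A) (_ : Finite A) (B : Type) (_ : Group B) (_ : Finite B)
    (f : FreeGroup α →* A) (g : FreeGroup β →* B),
    orderOf (f a) = orderOf (g b) ∧ orderOf (f u) ≠ orderOf (g v)

namespace OrderSeparated

theorem symm : OrderSeparated a u b v → OrderSeparated b v a u := by
  rintro ⟨A, _, _, B, _, _, f, g, hab, huv⟩
  exact ⟨B, inferInstance, inferInstance, A, inferInstance, inferInstance, g, f, hab.symm, huv.symm⟩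

theorem of_forall_not_isConj (ha : NotProperPower a) (hb : b ≠ 1)
    (h : ∀ k : ℤ, ¬ IsConj (a ^ k) u) : OrderSeparated a u b v := by
  obtain ⟨M, hM, hfactor⟩ := ha.exists_finite_hom_orderOf_ne h
  obtain ⟨R, hR, hpotent⟩ := exists_finite_hom_orderOf_eq hb
  obtain ⟨B, _, _, g, hg⟩ := hpotent (R * M) (Nat.mul_pos hR hM) (dvd_mul_right R M)
  obtain ⟨A, _, _, f, hf, hne⟩ :=
    hfactor (R * M) (Nat.mul_pos hR hM) (dvd_mul_left M R) (orderOf (g v))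
  exact ⟨A, inferInstance, inferInstance, B, inferInstance, inferInstance, f, g,
    hf.trans hg.symm, hne⟩

theorem of_natAbs_lt (ha : a ≠ 1) (hb : b ≠ 1) {k l : ℤ} (hk : IsConj (a ^ k) u)
    (hl : IsConj (b ^ l) v) (hkl : k.natAbs < l.natAbs) : OrderSeparated a u b v := by
  obtain ⟨M, hM, hM'⟩ := exists_finite_hom_orderOf_eq ha
  obtain ⟨N, hN, hN'⟩ := exists_finite_hom_orderOf_eq hb
  let n := M * N * (2 * l.natAbs)
  have hn : 0 < n := Nat.mul_pos (Nat.mul_pos hM hN) (by omega)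
  obtain ⟨A, _, _, f, hf⟩ := hM' n hn (by simp only [n, mul_assoc, dvd_mul_right])
  obtain ⟨B, _, _, g, hg⟩ := hN' n hn (by simp only [n, mul_comm M, mul_assoc, dvd_mul_right])
  refine ⟨A, inferInstance, inferInstance, B, inferInstance, inferInstance, f, g,
    hf.trans hg.symm, ?_⟩
  rw [← orderOf_eq_of_isConj (f.map_isConj hk), ← orderOf_eq_of_isConj (g.map_isConj hl),
    map_zpow, map_zpow]
  exact orderOf_zpow_ne_of_natAbs_lt (hf.trans hg.symm) (hf ▸ dvd_mul_left _ _) hkl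

end OrderSeparated

theorem isConj_or_isConj_inv_of_natAbs_eq {G : Type*} [Group G] {x y z : G} {k l : ℤ}
    (hy : IsConj (x ^ k) y) (hz : IsConj (x ^ l) z) (h : k.natAbs = l.natAbs) :
    IsConj y z ∨ IsConj y z⁻¹ := by
  obtain rfl | rfl := Int.natAbs_eq_natAbs_iff.mp h
  · exact .inl (hy.symm.trans hz)
  · obtain ⟨c, rfl⟩ := isConj_iff.mp hz
    refine .inr (hy.symm.trans (isConj_iff.mpr ⟨c, ?_⟩))
    group

theorem isConj_amalgam_or_isConj_inv {k l : ℤ} (hk : IsConj (a ^ k) u) (hl : IsConj (b ^ l) v)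
    (h : k.natAbs = l.natAbs) :
    IsConj (PushoutI.of (φ := amalMaps a b) true u) (PushoutI.of (φ := amalMaps a b) false v) ∨
      IsConj (PushoutI.of (φ := amalMaps a b) true u)
        (PushoutI.of (φ := amalMaps a b) false v)⁻¹ := by
  let i : FreeGroup α →* PushoutI (amalMaps a b) := PushoutI.of (φ := amalMaps a b) true
  let j : FreeGroup β →* PushoutI (amalMaps a b) := PushoutI.of (φ := amalMaps a b) false
  have hab : i a = j b := of_amalgamated_eq a b
  have hu := i.map_isConj hk
  have hv := j.map_isConj hl
  rw [map_zpow, hab] at hu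
  rw [map_zpow] at hv
  exact isConj_or_isConj_inv_of_natAbs_eq hu hv h

theorem OrderSeparated.of_forall_natAbs_ne (ha : NotProperPower a) (hb : NotProperPower b)
    (h : ∀ k l : ℤ, IsConj (a ^ k) u → IsConj (b ^ l) v → k.natAbs ≠ l.natAbs) :
    OrderSeparated a u b v := by
  by_cases! hu : ∀ k : ℤ, ¬ IsConj (a ^ k) u
  · exact .of_forall_not_isConj ha hb.ne_one hu
  by_cases! hv : ∀ l : ℤ, ¬ IsConj (b ^ l) v
  · exact (OrderSeparated.of_forall_not_isConj hb ha.ne_one hv).symm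
  obtain ⟨k, hk⟩ := hu
  obtain ⟨l, hl⟩ := hv
  obtain hlt | hgt := (h k l hk hl).lt_or_gt
  · exact .of_natAbs_lt ha.ne_one hb.ne_one hk hl hlt
  · exact (OrderSeparated.of_natAbs_lt hb.ne_one ha.ne_one hl hk hgt).symm

end Separation

theorem stmt19_general {α β : Type} (a : FreeGroup α) (b : FreeGroup β)
    (hpa : NotProperPower a) (hpb : NotProperPower b) (u : FreeGroup α) (v : FreeGroup β)
    (h1 : ¬ IsConj (PushoutI.of (φ := amalMaps a b) true u)
            (PushoutI.of (φ := amalMaps a b) false v))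
    (h2 : ¬ IsConj (PushoutI.of (φ := amalMaps a b) true u)
            (PushoutI.of (φ := amalMaps a b) false v)⁻¹) :
    ∃ (Q : Type) (_ : Group Q) (_ : Finite Q)
      (φ : PushoutI (amalMaps a b) →* Q),
      Function.Surjective φ ∧
      orderOf (φ (PushoutI.of (φ := amalMaps a b) true u)) ≠
        orderOf (φ (PushoutI.of (φ := amalMaps a b) false v)) := by
  have hseparated : OrderSeparated a u b v := .of_forall_natAbs_ne hpa hpb fun k l hk hl hkl =>
    (isConj_amalgam_or_isConj_inv hk hl hkl).elim h1 h2
  obtain ⟨A, _, _, B, _, _, f, g, hab, huv⟩ := hseparated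
  obtain ⟨Q, _, _, φ, hφ, hφf, hφg⟩ := exists_finite_quotient_amalgam f g hab
  exact ⟨Q, inferInstance, inferInstance, φ, hφ, by rwa [hφf, hφg]⟩

theorem stmt19 {α β : Type} (a : FreeGroup α) (b : FreeGroup β)
    (ha : a ≠ 1) (hb : b ≠ 1) (hpa : NotProperPower a) (hpb : NotProperPower b)
    (u : FreeGroup α) (v : FreeGroup β)
    (hu : u ∉ zpowers a) (hv : v ∉ zpowers b)
    (h1 : ¬ IsConj (PushoutI.of (φ := amalMaps a b) true u)
            (PushoutI.of (φ := amalMaps a b) false v))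
    (h2 : ¬ IsConj (PushoutI.of (φ := amalMaps a b) true u)
            (PushoutI.of (φ := amalMaps a b) false v)⁻¹) :
    ∃ (Q : Type) (_ : Group Q) (_ : Finite Q)
      (φ : PushoutI (amalMaps a b) →* Q),
      Function.Surjective φ ∧
      orderOf (φ (PushoutI.of (φ := amalMaps a b) true u)) ≠
        orderOf (φ (PushoutI.of (φ := amalMaps a b) false v)) :=
  stmt19_general a b hpa hpb u v h1 h2
end
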